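/- arXiv:1807.02396 — 2 statements merged into one kernel-verified Lean document; each statement's English description precedes it below -/
import Mathlib

section
/- For every n ≥ 1 and every θ ∈ ℝⁿ, the ψ₂-norm of the linear functional x ↦ ⟨x, θ⟩ with respect to the cone probability measure μ on the boundary of the unit ℓ¹-ball B₁ⁿ satisfies √n · ‖⟨·, θ⟩‖_{L^{ψ₂}(μ)} ≤ √6 · ‖θ‖_∞. -/
open MeasureTheory

/-- The cone over a set `B` with apex at the origin. -/
def coneSet {n : ℕ} (B : Set (Fin n → ℝ)) : Set (Fin n → ℝ) :=
  {y | ∃ x ∈ B, ∃ r ∈ Set.Icc (0 : ℝ) 1, y = r • x}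

/-- `μ` is the cone probability measure on the boundary of `K`. -/
def IsConeMeasure {n : ℕ} (K : Set (Fin n → ℝ)) (μ : Measure (Fin n → ℝ)) : Prop :=
  IsProbabilityMeasure μ ∧ μ (frontier K)ᶜ = 0 ∧
    ∀ B ⊆ frontier K, MeasurableSet B → μ B = volume (coneSet B) / volume K

/-- The `ψ₂`-Orlicz (Luxemburg) norm of `g` with respect to `μ`. -/
noncomputable def psi2Norm {α : Type*} [MeasurableSpace α] (μ : Measure α)
    (g : α → ℝ) : ℝ :=
  sInf {c : ℝ | 0 < c ∧ ∫ x, Real.exp ((|g x| / c) ^ 2) ∂μ ≤ 2}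

theorem psi_gamma_int (p : ℕ) :
    IntegrableOn (fun r : ℝ => r ^ p * Real.exp (-r)) (Set.Ioi 0) ∧
      ∫ r in Set.Ioi (0 : ℝ), r ^ p * Real.exp (-r) = (p.factorial : ℝ) := by
  have h1 := Real.GammaIntegral_convergent (s := (p : ℝ) + 1) (by positivity)
  have h2 := Real.Gamma_eq_integral (s := (p : ℝ) + 1) (by positivity)
  have e : (fun x : ℝ => Real.exp (-x) * x ^ ((p : ℝ) + 1 - 1)) =
      fun r : ℝ => r ^ p * Real.exp (-r) := by
    funext x
    rw [add_sub_cancel_right, Real.rpow_natCast, mul_comm]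
  rw [e] at h1 h2
  refine ⟨h1, ?_⟩
  rw [← h2, Real.Gamma_nat_eq_factorial]

theorem psi_lap_int (j : ℕ) :
    Integrable (fun y : ℝ => y ^ j * Real.exp (-|y|)) := by
  have h : IntegrableOn (fun y : ℝ => y ^ j * Real.exp (-|y|)) (Set.Ioi 0) := by
    refine (psi_gamma_int j).1.congr_fun (fun x hx => ?_) measurableSet_Ioi
    simp only [abs_of_pos (Set.mem_Ioi.1 hx)]
  have h2 : IntegrableOn (fun y : ℝ => y ^ j * Real.exp (-|y|)) (Set.Iic 0) := by
    rw [integrableOn_Iic_iff_integrableOn_Iio]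
    have := h.comp_neg
    simp only [Set.neg_Ioi, neg_zero] at this
    have h3 := this.const_mul ((-1 : ℝ) ^ j)
    refine h3.congr (Filter.Eventually.of_forall fun x => ?_)
    simp only [abs_neg]
    rw [← mul_assoc, ← mul_pow]; simp
  have := h2.union h
  rwa [Set.Iic_union_Ioi, integrableOn_univ] at this

theorem psi_lap_val (j : ℕ) :
    ∫ y : ℝ, y ^ j * Real.exp (-|y|) = if 2 ∣ j then 2 * (j.factorial : ℝ) else 0 := by
  split_ifs with hj
  · rw [← (psi_gamma_int j).2, ← integral_comp_abs (f := fun r => r ^ j * Real.exp (-r))]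
    congr 1; funext x
    rw [Even.pow_abs (even_iff_two_dvd.2 hj)]
  · have h := integral_neg_eq_self (fun y : ℝ => y ^ j * Real.exp (-|y|)) volume
    have ho : Odd j := by rwa [← Nat.not_even_iff_odd, even_iff_two_dvd]
    simp only [abs_neg, ho.neg_pow, neg_mul, integral_neg] at h
    linarith

theorem psi_card (n k : ℕ) :
    (Finset.piAntidiag (Finset.univ : Finset (Fin n)) k).card = (n + k - 1).choose k := by
  rw [← Finset.map_sym_eq_piAntidiag, Finset.card_map, Finset.sym_univ, Finset.card_univ,
    Sym.card_sym_eq_choose, Fintype.card_fin]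

theorem psi_moment (n : ℕ) (θ : Fin n → ℝ) (k : ℕ) :
    Integrable (fun y : Fin n → ℝ => (∑ i, y i * θ i) ^ k * Real.exp (-∑ i, |y i|)) ∧
    ∫ y : Fin n → ℝ, (∑ i, y i * θ i) ^ k * Real.exp (-∑ i, |y i|) =
      ∑ a ∈ Finset.piAntidiag Finset.univ k, (Nat.multinomial Finset.univ a : ℝ) *
        ∏ i, θ i ^ a i * (if 2 ∣ a i then 2 * ((a i).factorial : ℝ) else 0) := by
  have e : (fun y : Fin n → ℝ => (∑ i, y i * θ i) ^ k * Real.exp (-∑ i, |y i|)) =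
      fun y => ∑ a ∈ Finset.piAntidiag Finset.univ k, (Nat.multinomial Finset.univ a : ℝ) *
        ∏ i, (θ i ^ a i * (y i ^ a i * Real.exp (-|y i|))) := by
    funext y
    rw [Finset.sum_pow_eq_sum_piAntidiag, Finset.sum_mul, ← Finset.sum_neg_distrib, Real.exp_sum]
    refine Finset.sum_congr rfl fun a _ => ?_
    rw [mul_assoc, ← Finset.prod_mul_distrib]
    congr 1
    refine Finset.prod_congr rfl fun i _ => ?_
    rw [mul_pow]; ring
  have hi : ∀ a : Fin n → ℕ, Integrable (fun y : Fin n → ℝ =>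
      ∏ i, (θ i ^ a i * (y i ^ a i * Real.exp (-|y i|)))) := fun a =>
    Integrable.fintype_prod (f := fun i (t : ℝ) => θ i ^ a i * (t ^ a i * Real.exp (-|t|)))
      (fun i => (psi_lap_int (a i)).const_mul _)
  rw [e]
  refine ⟨integrable_finsetSum _ fun a _ => (hi a).const_mul _, ?_⟩
  rw [integral_finsetSum _ fun a _ => (hi a).const_mul _]
  refine Finset.sum_congr rfl fun a _ => ?_
  rw [integral_const_mul, integral_fintype_prod_volume_eq_prod
    (f := fun i (t : ℝ) => θ i ^ a i * (t ^ a i * Real.exp (-|t|)))]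
  congr 1
  refine Finset.prod_congr rfl fun i _ => ?_
  rw [integral_const_mul, psi_lap_val]

theorem psi_moment_le (n : ℕ) (θ : Fin n → ℝ) (M : ℝ) (hθ : ∀ i, |θ i| ≤ M) (k : ℕ) :
    ∫ y : Fin n → ℝ, (∑ i, y i * θ i) ^ (2 * k) * Real.exp (-∑ i, |y i|) ≤
      2 ^ n * (2 * k).factorial * M ^ (2 * k) * (n + k - 1).choose k := by
  classical
  rw [(psi_moment n θ (2 * k)).2, ← psi_card n k,
    ← Finset.card_map ⟨((2 : ℕ) • · : (Fin n → ℕ) → _), nsmul_right_injective two_ne_zero⟩,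
    Finset.map_nsmul_piAntidiag_univ _ two_ne_zero, mul_comm _ (Finset.card _ : ℝ),
    ← nsmul_eq_mul, ← Finset.sum_const, Finset.sum_filter]
  refine Finset.sum_le_sum fun a ha => ?_
  have hs : ∑ i, a i = 2 * k := (Finset.mem_piAntidiag.1 ha).1
  split_ifs with h
  · have hm : (Nat.multinomial Finset.univ a : ℝ) * ∏ i, ((a i).factorial : ℝ) =
        (2 * k).factorial := by
      rw [← hs, ← Nat.multinomial_spec]; push_cast; ring
    have : (∏ i, θ i ^ a i * (if 2 ∣ a i then 2 * ((a i).factorial : ℝ) else 0)) =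
        (∏ i, θ i ^ a i) * (2 ^ n * ∏ i, ((a i).factorial : ℝ)) := by
      simp only [h, if_true]
      rw [Finset.prod_mul_distrib, Finset.prod_mul_distrib]; simp
    rw [this]
    have h2 : ∏ i, θ i ^ a i ≤ M ^ (2 * k) := by
      rw [← hs, ← Finset.prod_pow_eq_pow_sum]
      refine (le_abs_self _).trans ?_
      rw [Finset.abs_prod]
      refine Finset.prod_le_prod (fun i _ => abs_nonneg _) fun i _ => ?_
      rw [abs_pow]
      exact pow_le_pow_left₀ (abs_nonneg _) (hθ i) _
    calc _ = (2 ^ n * ((Nat.multinomial Finset.univ a : ℝ) * ∏ i, ((a i).factorial : ℝ))) *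
          ∏ i, θ i ^ a i := by ring
      _ ≤ _ := by
        rw [hm]
        exact mul_le_mul_of_nonneg_left h2 (by positivity)
  · push Not at h
    obtain ⟨i, hi⟩ := h
    rw [Finset.prod_eq_zero (Finset.mem_univ i) (by simp [hi]), mul_zero]

/-- layer-cake identity -/
theorem psi_layer (p : ℕ) (s : ℝ) (hs : 0 ≤ s) :
    ENNReal.ofReal (s ^ p * Real.exp (-s)) +
      ∫⁻ r in Set.Ioi s, ENNReal.ofReal (p * (r ^ (p - 1) * Real.exp (-r))) =
      ∫⁻ r in Set.Ioi s, ENNReal.ofReal (r ^ p * Real.exp (-r)) := by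
  have hsub : Set.Ioi s ⊆ Set.Ioi 0 := Set.Ioi_subset_Ioi hs
  have i1 := (psi_gamma_int p).1.mono_set hsub
  have i2 : IntegrableOn (fun r : ℝ => p * (r ^ (p - 1) * Real.exp (-r))) (Set.Ioi s) :=
    ((psi_gamma_int (p-1)).1.mono_set hsub).const_mul _
  have hd : ∀ x ∈ Set.Ici s, HasDerivAt (fun r : ℝ => -(r ^ p * Real.exp (-r)))
      (x ^ p * Real.exp (-x) - p * (x ^ (p - 1) * Real.exp (-x))) x := by
    intro x _
    have := ((hasDerivAt_pow p x).mul ((hasDerivAt_neg x).exp)).neg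
    refine this.congr_deriv ?_
    ring
  have ht : Filter.Tendsto (fun r : ℝ => -(r ^ p * Real.exp (-r))) Filter.atTop (nhds 0) := by
    simpa using (Real.tendsto_pow_mul_exp_neg_atTop_nhds_zero p).neg
  have h := integral_Ioi_of_hasDerivAt_of_tendsto' hd (i1.sub i2) ht
  rw [integral_sub i1 i2] at h
  have p1 : ∀ᵐ r ∂(volume.restrict (Set.Ioi s)), 0 ≤ r ^ p * Real.exp (-r) := by
    filter_upwards [ae_restrict_mem measurableSet_Ioi] with r hr
    have : 0 < r := hsub hr
    positivity
  have p2 : ∀ᵐ r ∂(volume.restrict (Set.Ioi s)), 0 ≤ (p : ℝ) * (r ^ (p - 1) * Real.exp (-r)) := by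
    filter_upwards [ae_restrict_mem measurableSet_Ioi] with r hr
    have : 0 < r := hsub hr
    positivity
  rw [← ofReal_integral_eq_lintegral_ofReal i1 p1, ← ofReal_integral_eq_lintegral_ofReal i2 p2,
    ← ENNReal.ofReal_add (by positivity) (integral_nonneg_of_ae p2)]
  congr 1
  linarith

theorem psi_scale (n : ℕ) (h : (Fin n → ℝ) → ENNReal) (hm : Measurable h)
    (hh : ∀ r : ℝ, 0 < r → ∀ y, h (r • y) = h y) (r : ℝ) (hr : 0 < r) :
    ∫⁻ y in {y : Fin n → ℝ | ∑ i, |y i| ≤ r}, h y =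
      ENNReal.ofReal (r ^ n) * ∫⁻ y in {y : Fin n → ℝ | ∑ i, |y i| ≤ 1}, h y := by
  have mN : Measurable (fun y : Fin n → ℝ => ∑ i, |y i|) := by fun_prop
  have mS : ∀ t : ℝ, MeasurableSet {y : Fin n → ℝ | ∑ i, |y i| ≤ t} := fun t =>
    measurableSet_le mN measurable_const
  have hmap := Measure.map_addHaar_smul (volume : Measure (Fin n → ℝ)) hr.ne'
  have : ∫⁻ y in {y : Fin n → ℝ | ∑ i, |y i| ≤ r}, h y ∂(Measure.map (r • ·) volume) =
      ∫⁻ y in {y : Fin n → ℝ | ∑ i, |y i| ≤ 1}, h y := by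
    rw [setLIntegral_map (mS r) hm (by fun_prop)]
    have : (fun y : Fin n → ℝ => r • y) ⁻¹' {y : Fin n → ℝ | ∑ i, |y i| ≤ r} =
        {y : Fin n → ℝ | ∑ i, |y i| ≤ 1} := by
      ext y
      simp only [Set.mem_preimage, Set.mem_ofPred_eq, Pi.smul_apply, smul_eq_mul, abs_mul,
        abs_of_pos hr, ← Finset.mul_sum]
      constructor
      · intro hy; nlinarith
      · intro hy; nlinarith
    rw [this]
    simp only [hh r hr]
  rw [← this, hmap, Measure.restrict_smul, lintegral_smul_measure, smul_eq_mul, ← mul_assoc,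
    ← ENNReal.ofReal_mul (by positivity), Module.finrank_fin_fun, abs_of_pos (by positivity),
    mul_inv_cancel₀ (by positivity)]
  simp

theorem psi_tonelli (n : ℕ) (h : (Fin n → ℝ) → ENNReal) (hm : Measurable h)
    (hh : ∀ r : ℝ, 0 < r → ∀ y, h (r • y) = h y) (w : ℝ → ENNReal) (hw : Measurable w) :
    ∫⁻ y : Fin n → ℝ, h y * ∫⁻ r in Set.Ioi (∑ i, |y i|), w r =
      (∫⁻ r in Set.Ioi (0 : ℝ), w r * ENNReal.ofReal (r ^ n)) *
        ∫⁻ y in {y : Fin n → ℝ | ∑ i, |y i| ≤ 1}, h y := by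
  have mN : Measurable (fun y : Fin n → ℝ => ∑ i, |y i|) := by fun_prop
  have mS : ∀ t : ℝ, MeasurableSet {y : Fin n → ℝ | ∑ i, |y i| ≤ t} := fun t =>
    measurableSet_le mN measurable_const
  have mT : MeasurableSet {q : (Fin n → ℝ) × ℝ | ∑ i, |q.1 i| ≤ q.2} :=
    measurableSet_le (by fun_prop) measurable_snd
  have e1 : ∀ y : Fin n → ℝ, h y * ∫⁻ r in Set.Ioi (∑ i, |y i|), w r =
      ∫⁻ r in Set.Ioi (0 : ℝ),
        {q : (Fin n → ℝ) × ℝ | ∑ i, |q.1 i| ≤ q.2}.indicator (fun q => h q.1 * w q.2) (y, r) := by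
    intro y
    have hN : 0 ≤ ∑ i, |y i| := Finset.sum_nonneg fun i _ => abs_nonneg _
    rw [setLIntegral_congr Ioi_ae_eq_Ici, setLIntegral_congr (Ioi_ae_eq_Ici (a := (0 : ℝ))),
      ← lintegral_const_mul _ hw, ← lintegral_indicator measurableSet_Ici,
      ← lintegral_indicator measurableSet_Ici]
    congr 1; funext r
    simp only [Set.indicator, Set.mem_Ici, Set.mem_ofPred_eq]
    split_ifs <;> first | rfl | (exfalso; linarith)
  simp only [e1]
  rw [lintegral_lintegral_swap, ← lintegral_mul_const _ (by fun_prop)]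
  · refine setLIntegral_congr_fun measurableSet_Ioi fun r hr => ?_
    rw [mul_assoc, ← psi_scale n h hm hh r hr, ← lintegral_const_mul _ hm,
      ← lintegral_indicator (mS r)]
    congr 1; funext y
    simp only [Set.indicator, Set.mem_ofPred_eq, mul_comm]
  · exact (Measurable.indicator (by fun_prop) mT).aemeasurable

theorem psi_polar (n : ℕ) (hn : 1 ≤ n) (h : (Fin n → ℝ) → ENNReal) (hm : Measurable h)
    (hh : ∀ r : ℝ, 0 < r → ∀ y, h (r • y) = h y) (p : ℕ)
    (hf : ∫⁻ y in {y : Fin n → ℝ | ∑ i, |y i| ≤ 1}, h y ≠ ⊤) :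
    ∫⁻ y : Fin n → ℝ, h y * ENNReal.ofReal ((∑ i, |y i|) ^ p * Real.exp (-∑ i, |y i|)) =
      ENNReal.ofReal (n * (n + p - 1).factorial) *
        ∫⁻ y in {y : Fin n → ℝ | ∑ i, |y i| ≤ 1}, h y := by
  have mN : Measurable (fun y : Fin n → ℝ => ∑ i, |y i|) := by fun_prop
  have t1 := psi_tonelli n h hm hh (fun r => ENNReal.ofReal (r ^ p * Real.exp (-r)))
    (by fun_prop)
  have t2 := psi_tonelli n h hm hh (fun r => ENNReal.ofReal (p * (r ^ (p - 1) * Real.exp (-r))))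
    (by fun_prop)
  have pos : ∀ q : ℕ, ∀ᵐ r ∂(volume.restrict (Set.Ioi (0:ℝ))), 0 ≤ r ^ q * Real.exp (-r) := by
    intro q
    filter_upwards [ae_restrict_mem measurableSet_Ioi] with r hr
    have : 0 < r := hr
    positivity
  have g1 : ∫⁻ r in Set.Ioi (0 : ℝ), ENNReal.ofReal (r ^ p * Real.exp (-r)) *
      ENNReal.ofReal (r ^ n) = ENNReal.ofReal ((n + p).factorial) := by
    rw [← (psi_gamma_int (n + p)).2, ofReal_integral_eq_lintegral_ofReal (psi_gamma_int (n+p)).1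
      (pos _)]
    refine setLIntegral_congr_fun measurableSet_Ioi fun r hr => ?_
    have : 0 < r := hr
    rw [← ENNReal.ofReal_mul (by positivity)]
    congr 1; ring
  have g2 : ∫⁻ r in Set.Ioi (0 : ℝ), ENNReal.ofReal (p * (r ^ (p - 1) * Real.exp (-r))) *
      ENNReal.ofReal (r ^ n) = ENNReal.ofReal (p * (n + p - 1).factorial) := by
    rw [← (psi_gamma_int (n + p - 1)).2, ENNReal.ofReal_mul (by positivity),
      ofReal_integral_eq_lintegral_ofReal (psi_gamma_int (n+p-1)).1 (pos _),
      ← lintegral_const_mul _ (by fun_prop)]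
    refine setLIntegral_congr_fun measurableSet_Ioi fun r hr => ?_
    have : 0 < r := hr
    rw [← ENNReal.ofReal_mul (by positivity), ← ENNReal.ofReal_mul (by positivity)]
    congr 1
    rcases p with _ | p
    · simp
    · rw [show n + (p + 1) - 1 = p + n by omega, pow_add]; simp; ring
  rw [g1] at t1
  rw [g2] at t2
  set H := ∫⁻ y in {y : Fin n → ℝ | ∑ i, |y i| ≤ 1}, h y with hH
  have key : (∫⁻ y : Fin n → ℝ, h y *
      ENNReal.ofReal ((∑ i, |y i|) ^ p * Real.exp (-∑ i, |y i|))) +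
      ENNReal.ofReal (p * (n + p - 1).factorial) * H =
      ENNReal.ofReal (n * (n + p - 1).factorial) * H +
      ENNReal.ofReal (p * (n + p - 1).factorial) * H := by
    rw [← t2, ← lintegral_add_left (by fun_prop), t2, ← add_mul,
      ← ENNReal.ofReal_add (by positivity) (by positivity)]
    have : ((n : ℝ) * (n + p - 1).factorial + p * (n + p - 1).factorial) =
        ((n + p).factorial : ℝ) := by
      rw [← Nat.mul_factorial_pred (n := n + p) (by omega)]; push_cast; ring
    rw [this, ← t1]
    congr 1; funext y
    rw [← mul_add, psi_layer]
    exact Finset.sum_nonneg fun i _ => abs_nonneg _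
  exact (ENNReal.add_left_inj (ENNReal.mul_ne_top ENNReal.ofReal_ne_top hf)).1 key

theorem psi_ball_vol (n : ℕ) (hn : 1 ≤ n) :
    volume {y : Fin n → ℝ | ∑ i, |y i| ≤ 1} ≠ ⊤ ∧
      ENNReal.ofReal (n * (n - 1).factorial) * volume {y : Fin n → ℝ | ∑ i, |y i| ≤ 1} =
        ENNReal.ofReal (2 ^ n) := by
  have hfin : volume {y : Fin n → ℝ | ∑ i, |y i| ≤ 1} ≠ ⊤ := by
    refine ne_top_of_le_ne_top (measure_closedBall_lt_top (x := (0 : Fin n → ℝ)) (r := 1)).ne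
      (measure_mono fun y hy => ?_)
    rw [mem_closedBall_zero_iff, pi_norm_le_iff_of_nonneg zero_le_one]
    intro i
    exact (Finset.single_le_sum (f := fun i => |y i|) (fun i _ => abs_nonneg _)
      (Finset.mem_univ i)).trans hy
  refine ⟨hfin, ?_⟩
  have h := psi_polar n hn (fun _ => 1) measurable_const (fun _ _ _ => rfl) 0 (by simpa using hfin)
  simp only [lintegral_const, Measure.restrict_apply_univ, one_mul, add_zero, pow_zero] at h
  rw [← h]
  have m := psi_moment n 0 0
  simp only [pow_zero, one_mul] at m
  rw [← ofReal_integral_eq_lintegral_ofReal m.1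
    (Filter.Eventually.of_forall fun y => (Real.exp_pos _).le), m.2]
  simp [Nat.multinomial]

theorem psi_cone (n : ℕ) (hn : 1 ≤ n) (μ : Measure (Fin n → ℝ))
    (hμ : IsConeMeasure {x : Fin n → ℝ | ∑ i, |x i| ≤ 1} μ)
    (f : (Fin n → ℝ) → ENNReal) (hf : Measurable f) :
    ∫⁻ x, f x ∂μ ≤ (volume {y : Fin n → ℝ | ∑ i, |y i| ≤ 1})⁻¹ *
      ∫⁻ y in {y : Fin n → ℝ | ∑ i, |y i| ≤ 1}, f ((∑ i, |y i|)⁻¹ • y) := by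
  have : Nonempty (Fin n) := ⟨⟨0, hn⟩⟩
  have mφ : Measurable (fun y : Fin n → ℝ => (∑ i, |y i|)⁻¹ • y) := by fun_prop
  have cN : Continuous (fun y : Fin n → ℝ => ∑ i, |y i|) := by fun_prop
  obtain ⟨_, h0, h1⟩ := hμ
  set K := {y : Fin n → ℝ | ∑ i, |y i| ≤ 1} with hK
  have hfr : ∀ x ∈ frontier K, ∑ i, |x i| = 1 := fun x hx =>
    frontier_le_subset_eq cN continuous_const hx
  have hle : μ ≤ (volume K)⁻¹ •
      Measure.map (fun y : Fin n → ℝ => (∑ i, |y i|)⁻¹ • y) (volume.restrict K) := by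
    refine Measure.le_iff.2 fun s hs => ?_
    have e1 : μ s ≤ μ (s ∩ frontier K) := by
      calc μ s ≤ μ ((s ∩ frontier K) ∪ (frontier K)ᶜ) := measure_mono fun x hx => by
            by_cases h : x ∈ frontier K
            · exact Or.inl ⟨hx, h⟩
            · exact Or.inr h
        _ ≤ μ (s ∩ frontier K) + μ (frontier K)ᶜ := measure_union_le _ _
        _ = _ := by rw [h0, add_zero]
    refine e1.trans ?_
    rw [h1 _ Set.inter_subset_right (hs.inter isClosed_frontier.measurableSet),
      Measure.smul_apply, smul_eq_mul, Measure.map_apply mφ hs,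
      Measure.restrict_apply (mφ hs), ENNReal.div_eq_inv_mul]
    refine mul_le_mul_right ?_ _
    calc volume (coneSet (s ∩ frontier K)) ≤
        volume (((fun y : Fin n → ℝ => (∑ i, |y i|)⁻¹ • y) ⁻¹' s ∩ K) ∪ {0}) := by
          refine measure_mono ?_
          rintro _ ⟨x, ⟨hxs, hxf⟩, r, ⟨hr0, hr1⟩, rfl⟩
          have hx := hfr x hxf
          rcases hr0.eq_or_lt with h | h
          · right; simp [← h]
          · left
            have : ∑ i, |(r • x) i| = r := by
              simp only [Pi.smul_apply, smul_eq_mul, abs_mul, ← Finset.mul_sum, hx,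
                abs_of_pos h, mul_one]
            refine ⟨?_, ?_⟩
            · simp only [Set.mem_preimage]
              rw [this, smul_smul, inv_mul_cancel₀ h.ne', one_smul]
              exact hxs
            · change ∑ i, |(r • x) i| ≤ 1
              rw [this]; exact hr1
      _ ≤ _ := measure_union_le _ _
      _ = _ := by rw [measure_singleton, add_zero]
  refine (lintegral_mono' hle le_rfl).trans ?_
  rw [lintegral_smul_measure, smul_eq_mul, lintegral_map hf mφ]

theorem psi_cone_moment (n : ℕ) (hn : 1 ≤ n) (θ : Fin n → ℝ) (μ : Measure (Fin n → ℝ))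
    (hμ : IsConeMeasure {x : Fin n → ℝ | ∑ i, |x i| ≤ 1} μ)
    (M : ℝ) (hM : 0 < M) (hθ : ∀ i, |θ i| ≤ M) (k : ℕ) :
    ∫⁻ x, ENNReal.ofReal ((∑ i, x i * θ i) ^ (2 * k)) ∂μ ≤
      ENNReal.ofReal ((2 * k).factorial * M ^ (2 * k) * (n + k - 1).choose k *
        (n - 1).factorial / (n + 2 * k - 1).factorial) := by
  refine (psi_cone n hn μ hμ _ (by fun_prop)).trans ?_
  obtain ⟨hVf, hV⟩ := psi_ball_vol n hn
  set h : (Fin n → ℝ) → ENNReal := fun y =>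
    ENNReal.ofReal ((∑ i, ((∑ i, |y i|)⁻¹ • y) i * θ i) ^ (2 * k)) with hdef
  have hm : Measurable h := by fun_prop
  have hh : ∀ r : ℝ, 0 < r → ∀ y, h (r • y) = h y := by
    intro r hr y
    simp only [hdef]
    have : (∑ i, |(r • y) i|)⁻¹ • (r • y) = (∑ i, |y i|)⁻¹ • y := by
      simp only [Pi.smul_apply, smul_eq_mul, abs_mul, ← Finset.mul_sum, abs_of_pos hr]
      rw [smul_smul, mul_inv, mul_assoc, mul_comm, mul_assoc, mul_inv_cancel₀ hr.ne', mul_one]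
    rw [this]
  have hE : ∀ y : Fin n → ℝ, ∑ i, ((∑ i, |y i|)⁻¹ • y) i * θ i =
      (∑ i, |y i|)⁻¹ * ∑ i, y i * θ i := by
    intro y
    simp only [Pi.smul_apply, smul_eq_mul, mul_assoc, ← Finset.mul_sum]
  have hS : ∀ y : Fin n → ℝ, |∑ i, y i * θ i| ≤ (∑ i, |y i|) * M := by
    intro y
    refine (Finset.abs_sum_le_sum_abs _ _).trans ?_
    rw [Finset.sum_mul]
    refine Finset.sum_le_sum fun i _ => ?_
    rw [abs_mul]
    exact mul_le_mul_of_nonneg_left (hθ i) (abs_nonneg _)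
  have hN : ∀ y : Fin n → ℝ, 0 ≤ ∑ i, |y i| := fun y => Finset.sum_nonneg fun i _ => abs_nonneg _
  have hHf : ∫⁻ y in {y : Fin n → ℝ | ∑ i, |y i| ≤ 1}, h y ≠ ⊤ := by
    refine ne_top_of_le_ne_top (b := ENNReal.ofReal (M ^ (2 * k)) *
      volume {y : Fin n → ℝ | ∑ i, |y i| ≤ 1}) (ENNReal.mul_ne_top ENNReal.ofReal_ne_top hVf) ?_
    rw [← setLIntegral_const]
    refine lintegral_mono fun y => ENNReal.ofReal_le_ofReal ?_
    rw [hE, ← Even.pow_abs (even_two_mul k)]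
    refine pow_le_pow_left₀ (abs_nonneg _) ?_ _
    rw [abs_mul, abs_inv, abs_of_nonneg (hN y)]
    rcases (hN y).eq_or_lt with h | h
    · rw [← h]; simp [hM.le]
    · rw [inv_mul_le_iff₀ h]; exact hS y
  have hP := psi_polar n hn h hm hh (2 * k) hHf
  have hA : ∫⁻ y : Fin n → ℝ, h y *
      ENNReal.ofReal ((∑ i, |y i|) ^ (2 * k) * Real.exp (-∑ i, |y i|)) ≤
      ENNReal.ofReal (2 ^ n * (2 * k).factorial * M ^ (2 * k) * (n + k - 1).choose k) := by
    refine le_trans (le_of_eq ?_) (ENNReal.ofReal_le_ofReal (psi_moment_le n θ M hθ k))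
    rw [ofReal_integral_eq_lintegral_ofReal (psi_moment n θ (2 * k)).1
      (Filter.Eventually.of_forall fun y =>
        mul_nonneg ((even_two_mul k).pow_nonneg _) (Real.exp_pos _).le)]
    congr 1; funext y
    simp only [hdef]
    rw [← ENNReal.ofReal_mul ((even_two_mul k).pow_nonneg _), hE, ← mul_assoc, ← mul_pow]
    congr 3
    rcases (hN y).eq_or_lt with h | h
    · have := hS y
      rw [← h, zero_mul] at this
      rw [abs_nonpos_iff.1 this]; simp
    · field_simp
  rw [hP] at hA
  set H := ∫⁻ y in {y : Fin n → ℝ | ∑ i, |y i| ≤ 1}, h y with hHdef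
  set V := volume {y : Fin n → ℝ | ∑ i, |y i| ≤ 1} with hVdef
  have hn0 : (0 : ℝ) < n := by exact_mod_cast hn
  have hV2 : (n * (n - 1).factorial : ℝ) * V.toReal = 2 ^ n := by
    have := congrArg ENNReal.toReal hV
    rwa [ENNReal.toReal_mul, ENNReal.toReal_ofReal (by positivity),
      ENNReal.toReal_ofReal (by positivity)] at this
  have hA2 : (n * (n + 2 * k - 1).factorial : ℝ) * H.toReal ≤
      2 ^ n * (2 * k).factorial * M ^ (2 * k) * (n + k - 1).choose k := by
    have := ENNReal.toReal_mono ENNReal.ofReal_ne_top hA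
    rwa [ENNReal.toReal_mul, ENNReal.toReal_ofReal (by positivity),
      ENNReal.toReal_ofReal (by positivity)] at this
  have hVpos : 0 < V.toReal := by
    have : 0 < (n * (n - 1).factorial : ℝ) * V.toReal := by rw [hV2]; positivity
    exact pos_of_mul_pos_right this (by positivity)
  rw [← ENNReal.ofReal_toReal hVf, ← ENNReal.ofReal_toReal hHf, ← ENNReal.ofReal_inv_of_pos hVpos,
    ← ENNReal.ofReal_mul (by positivity)]
  refine ENNReal.ofReal_le_ofReal ?_
  rw [inv_mul_le_iff₀ hVpos, mul_div_assoc', le_div_iff₀ (by positivity)]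
  rw [← hV2] at hA2
  refine le_of_mul_le_mul_left ?_ hn0
  linarith

theorem psi_term (n : ℕ) (hn : 1 ≤ n) (M : ℝ) (hM : 0 < M) (k : ℕ) :
    (n / (6 * M ^ 2)) ^ k / k.factorial * ((2 * k).factorial * M ^ (2 * k) *
      (n + k - 1).choose k * (n - 1).factorial / (n + 2 * k - 1).factorial) ≤
      1 / 2 * (2 / 3 : ℝ) ^ k + if k = 0 then 1 / 2 else 0 := by
  have h1 : ((n + k - 1).choose k : ℝ) * k.factorial * (n - 1).factorial =
      (n + k - 1).factorial := by
    have := Nat.choose_mul_factorial_mul_factorial (n := n + k - 1) (k := k) (by omega)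
    rw [show n + k - 1 - k = n - 1 by omega] at this
    exact_mod_cast this
  have h2 : ((n + k - 1).factorial : ℝ) * n ^ k ≤ (n + 2 * k - 1).factorial := by
    have := Nat.factorial_mul_pow_le_factorial (m := n + k - 1) (n := k)
    rw [show n + k - 1 + k = n + 2 * k - 1 by omega] at this
    have h3 : n ^ k ≤ (n + k - 1 + 1) ^ k := Nat.pow_le_pow_left (by omega) _
    exact_mod_cast (Nat.mul_le_mul_left _ h3).trans this
  have h3 : ((2 * k).choose k : ℝ) * k.factorial * k.factorial = (2 * k).factorial := by
    have := Nat.choose_mul_factorial_mul_factorial (n := 2 * k) (k := k) (by omega)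
    rw [show 2 * k - k = k by omega] at this
    exact_mod_cast this
  have h4 : ((2 * k).choose k : ℝ) / 6 ^ k ≤
      1 / 2 * (2 / 3 : ℝ) ^ k + if k = 0 then 1 / 2 else 0 := by
    rcases k with _ | k
    · norm_num
    · have : (2 * (k + 1)).choose (k + 1) ≤ 2 * 4 ^ k := by
        have a := Nat.choose_succ_succ (2 * k + 1) k
        have b := Nat.choose_symm_half k
        have c := Nat.choose_middle_le_pow k
        rw [show 2 * (k + 1) = (2 * k + 1) + 1 by ring]
        simp only [Nat.succ_eq_add_one] at a
        omega
      have : ((2 * (k + 1)).choose (k + 1) : ℝ) ≤ 2 * 4 ^ k := by exact_mod_cast this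
      simp only [Nat.add_eq_zero_iff, one_ne_zero, and_false, if_false, add_zero]
      rw [div_le_iff₀ (by positivity)]
      have e : (1 / 2 : ℝ) * (2 / 3) ^ (k + 1) * 6 ^ (k + 1) = 2 * 4 ^ k := by
        rw [mul_assoc, ← mul_pow]; norm_num; ring
      rw [e]; exact this
  refine le_trans ?_ h4
  have e : (n / (6 * M ^ 2)) ^ k / k.factorial * ((2 * k).factorial * M ^ (2 * k) *
      (n + k - 1).choose k * (n - 1).factorial / (n + 2 * k - 1).factorial) =
      ((2 * k).choose k : ℝ) / 6 ^ k * (((n + k - 1).factorial : ℝ) * n ^ k /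
        (n + 2 * k - 1).factorial) := by
    rw [← h1, ← h3, div_pow, mul_pow, ← pow_mul]
    field_simp
  rw [e]
  exact mul_le_of_le_one_right (by positivity) (div_le_one_of_le₀ h2 (by positivity))

theorem psi_sum : HasSum (fun k : ℕ => 1 / 2 * (2 / 3 : ℝ) ^ k + if k = 0 then 1 / 2 else 0) 2 := by
  have a := (hasSum_geometric_of_lt_one (r := (2 / 3 : ℝ)) (by norm_num) (by norm_num)).mul_left
    (1 / 2)
  have b := a.add (hasSum_ite_eq (0 : ℕ) (1 / 2 : ℝ))
  have e : (1 / 2 * (1 - 2 / 3)⁻¹ + 1 / 2 : ℝ) = 2 := by norm_num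
  rw [e] at b
  exact b

theorem psi_main (n : ℕ) (hn : 1 ≤ n) (θ : Fin n → ℝ) (μ : Measure (Fin n → ℝ))
    (hμ : IsConeMeasure {x : Fin n → ℝ | ∑ i, |x i| ≤ 1} μ)
    (M : ℝ) (hM : 0 < M) (hθ : ∀ i, |θ i| ≤ M) :
    ∫ x, Real.exp ((|∑ i, x i * θ i| / (Real.sqrt 6 * M / Real.sqrt n)) ^ 2) ∂μ ≤ 2 := by
  have hn0 : (0 : ℝ) < n := by exact_mod_cast hn
  rw [integral_eq_lintegral_of_nonneg_ae
    (Filter.Eventually.of_forall fun x => (Real.exp_pos _).le)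
    (Measurable.aestronglyMeasurable (by fun_prop))]
  refine ENNReal.toReal_le_of_le_ofReal (by norm_num) ?_
  have e : ∀ x : Fin n → ℝ,
      ENNReal.ofReal (Real.exp ((|∑ i, x i * θ i| / (Real.sqrt 6 * M / Real.sqrt n)) ^ 2)) =
      ∑' k : ℕ, ENNReal.ofReal ((n / (6 * M ^ 2)) ^ k / k.factorial) *
        ENNReal.ofReal ((∑ i, x i * θ i) ^ (2 * k)) := by
    intro x
    have e1 : (|∑ i, x i * θ i| / (Real.sqrt 6 * M / Real.sqrt n)) ^ 2 =
        n / (6 * M ^ 2) * (∑ i, x i * θ i) ^ 2 := by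
      rw [div_pow, div_pow, mul_pow, sq_abs, Real.sq_sqrt (by norm_num), Real.sq_sqrt hn0.le]
      field_simp
    rw [e1]
    set t := n / (6 * M ^ 2) * (∑ i, x i * θ i) ^ 2 with ht
    have t0 : 0 ≤ t := by positivity
    have hs : HasSum (fun k : ℕ => t ^ k / k.factorial) (Real.exp t) := by
      rw [Real.exp_eq_exp_ℝ]
      exact NormedSpace.expSeries_div_hasSum_exp t
    rw [← hs.tsum_eq, ENNReal.ofReal_tsum_of_nonneg (fun k => by positivity) hs.summable]
    congr 1; funext k
    rw [← ENNReal.ofReal_mul (by positivity), ht, mul_pow, ← pow_mul]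
    congr 1; ring
  simp only [e]
  rw [lintegral_tsum (fun k => Measurable.aemeasurable (by fun_prop)), ← psi_sum.tsum_eq,
    ENNReal.ofReal_tsum_of_nonneg (fun k => by positivity) psi_sum.summable]
  refine ENNReal.tsum_le_tsum fun k => ?_
  rw [lintegral_const_mul _ (by fun_prop)]
  refine (mul_le_mul_right (psi_cone_moment n hn θ μ hμ M hM hθ k) _).trans ?_
  rw [← ENNReal.ofReal_mul (by positivity)]
  exact ENNReal.ofReal_le_ofReal (psi_term n hn M hM k)

/-- `ψ₂`-estimate for linear functionals with respect to the cone measure on the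
boundary of the unit `ℓ¹`-ball: `√n·‖⟨·,θ⟩‖_{ψ₂} ≤ √6·‖θ‖_∞`. -/
theorem psi2_bound_cone_measure_l1_ball (n : ℕ) (hn : 1 ≤ n) (θ : Fin n → ℝ)
    (μ : Measure (Fin n → ℝ))
    (hμ : IsConeMeasure {x : Fin n → ℝ | ∑ i, |x i| ≤ 1} μ) :
    Real.sqrt n * psi2Norm μ (fun x => ∑ i, x i * θ i) ≤
      Real.sqrt 6 * ⨆ i, |θ i| := by
  have hn0 : (0 : ℝ) < n := by exact_mod_cast hn
  have hsn : 0 < Real.sqrt n := Real.sqrt_pos.2 hn0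
  have hs6 : 0 < Real.sqrt 6 := Real.sqrt_pos.2 (by norm_num)
  have hb : ∀ i, |θ i| ≤ ⨆ i, |θ i| := fun i =>
    le_ciSup (f := fun i => |θ i|) (Set.finite_range _).bddAbove i
  have h0 : 0 ≤ ⨆ i, |θ i| := Real.iSup_nonneg fun i => abs_nonneg _
  have key : ∀ M : ℝ, 0 < M → (∀ i, |θ i| ≤ M) →
      Real.sqrt n * psi2Norm μ (fun x => ∑ i, x i * θ i) ≤ Real.sqrt 6 * M := by
    intro M hM hθ
    rw [← le_div_iff₀' hsn]
    exact csInf_le ⟨0, fun c hc => hc.1.le⟩ ⟨by positivity, psi_main n hn θ μ hμ M hM hθ⟩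
  refine le_of_forall_pos_le_add fun ε hε => ?_
  have := key ((⨆ i, |θ i|) + ε / Real.sqrt 6) (by positivity)
    (fun i => (hb i).trans (le_add_of_nonneg_right (by positivity)))
  rwa [mul_add, mul_div_cancel₀ _ hs6.ne'] at this
end

section
/- Let P ⊂ ℝⁿ be a symmetric polytope. Then (1/|P|) ∫_P ‖x‖₁ dx ≤ ((1+√2)/n) · max ‖ε₁y₁ + … + εₙyₙ‖₁, where the maximum is over all facets conv{y₁,…,yₙ} of P (with vertices y₁,…,yₙ) and all sign choices ε₁,…,εₙ ∈ {−1,+1}. -/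
open MeasureTheory

/-- `F` is a facet of the polytope `P ⊂ ℝⁿ`: a proper nonempty exposed face whose
affine span has dimension `n − 1`. -/
def IsFacet {n : ℕ} (P F : Set (Fin n → ℝ)) : Prop :=
  IsExposed ℝ P F ∧ F ≠ P ∧ F.Nonempty ∧
    Module.finrank ℝ (affineSpan ℝ F).direction = n - 1


lemma kh_sum_cons {n : ℕ} (F : (Fin (n+1) → Bool) → ℝ) :
    ∑ e, F e = ∑ x : Fin n → Bool, F (Fin.cons true x) + ∑ x : Fin n → Bool, F (Fin.cons false x) := by
  rw [← (Fin.consEquiv (fun _ : Fin (n+1) => Bool)).sum_comp, Fintype.sum_prod_type, Fintype.sum_bool]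
  rfl

def khNeg {n : ℕ} (e : Fin n → Bool) : Fin n → Bool := fun i => !(e i)

def khFlip {n : ℕ} (i : Fin n) (e : Fin n → Bool) : Fin n → Bool := Function.update e i (!(e i))

lemma khNeg_neg {n : ℕ} (e : Fin n → Bool) : khNeg (khNeg e) = e := by
  funext i; simp [khNeg]

lemma khFlip_flip {n : ℕ} (i : Fin n) (e : Fin n → Bool) : khFlip i (khFlip i e) = e := by
  funext j; simp [khFlip]

lemma khNeg_cons {n : ℕ} (b : Bool) (e : Fin n → Bool) :
    khNeg (Fin.cons b e : Fin (n+1) → Bool) = Fin.cons (!b) (khNeg e) := by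
  funext i; refine Fin.cases ?_ (fun i => ?_) i <;> simp [khNeg]

lemma khFlip_cons_zero {n : ℕ} (b : Bool) (e : Fin n → Bool) :
    khFlip 0 (Fin.cons b e : Fin (n+1) → Bool) = Fin.cons (!b) e := by
  simp [khFlip]

lemma khFlip_cons_succ {n : ℕ} (b : Bool) (i : Fin n) (e : Fin n → Bool) :
    khFlip i.succ (Fin.cons b e : Fin (n+1) → Bool) = Fin.cons b (khFlip i e) := by
  simp [khFlip, Fin.cons_update]

lemma khFlip_neg {n : ℕ} (i : Fin n) (e : Fin n → Bool) :
    khFlip i (khNeg e) = khNeg (khFlip i e) := by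
  funext j
  by_cases h : j = i
  · subst h; simp [khFlip, khNeg]
  · simp [khFlip, khNeg, h]

lemma kh_sum_neg {n : ℕ} (F : (Fin n → Bool) → ℝ) : ∑ e, F (khNeg e) = ∑ e, F e :=
  Equiv.sum_comp (Function.Involutive.toPerm khNeg khNeg_neg) F

lemma kh_sum_flip {n : ℕ} (i : Fin n) (F : (Fin n → Bool) → ℝ) :
    ∑ e, F (khFlip i e) = ∑ e, F e :=
  Equiv.sum_comp (Function.Involutive.toPerm (khFlip i) (khFlip_flip i)) F

noncomputable def khD {n : ℕ} (f : (Fin n → Bool) → ℝ) : ℝ :=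
  ∑ i, ∑ e, (f e - f (khFlip i e)) ^ 2

lemma khD_neg {n : ℕ} (f : (Fin n → Bool) → ℝ) : khD (fun e => f (khNeg e)) = khD f := by
  unfold khD
  refine Finset.sum_congr rfl fun i _ => ?_
  rw [← kh_sum_neg]
  simp [khNeg_neg, khFlip_neg]

lemma khD_para {n : ℕ} (u w : (Fin n → Bool) → ℝ) :
    khD (fun e => u e + w e) + khD (fun e => u e - w e) = 2 * khD u + 2 * khD w := by
  unfold khD
  simp only [Finset.mul_sum, ← Finset.sum_add_distrib]
  refine Finset.sum_congr rfl fun i _ => Finset.sum_congr rfl fun e _ => ?_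
  ring

lemma khD_cons {n : ℕ} (f : (Fin (n+1) → Bool) → ℝ) :
    khD f = khD (fun x => f (Fin.cons true x)) + khD (fun x => f (Fin.cons false x))
      + 2 * ∑ x : Fin n → Bool, (f (Fin.cons true x) - f (Fin.cons false x)) ^ 2 := by
  unfold khD
  rw [Fin.sum_univ_succ]
  simp only [kh_sum_cons, khFlip_cons_zero, khFlip_cons_succ, Finset.sum_add_distrib, Bool.not_true,
    Bool.not_false]
  have : ∑ x : Fin n → Bool, (f (Fin.cons false x) - f (Fin.cons true x)) ^ 2
    = ∑ x : Fin n → Bool, (f (Fin.cons true x) - f (Fin.cons false x)) ^ 2 :=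
    Finset.sum_congr rfl fun x _ => by ring
  rw [this]; ring

lemma kh_cs {n : ℕ} (f : (Fin n → Bool) → ℝ) : (∑ e, f e) ^ 2 / 2 ^ n ≤ ∑ e, f e ^ 2 := by
  have := sq_sum_le_card_mul_sum_sq (s := Finset.univ) (f := f)
  simp at this
  rw [div_le_iff₀ (by positivity)]
  linarith

lemma kh_poincare : ∀ (n : ℕ) (f : (Fin n → Bool) → ℝ),
    2 * ∑ e, f e ^ 2 ≤ khD f / 4 + 2 * ((∑ e, f e) ^ 2 / 2 ^ n)
      + (∑ e, (f e - f (khNeg e)) ^ 2) / 4 := by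
  intro n
  induction n with
  | zero =>
    intro f
    have : ∀ F : (Fin 0 → Bool) → ℝ, ∑ e, F e = F Fin.elim0 := fun F => by
      rw [Fintype.sum_unique]; congr
    simp only [this, khD, Finset.univ_eq_empty, Finset.sum_empty]
    have : khNeg (Fin.elim0 : Fin 0 → Bool) = Fin.elim0 := Subsingleton.elim _ _
    rw [this]; simp
  | succ n ih =>
    intro f
    obtain ⟨u, hu⟩ : ∃ u : (Fin n → Bool) → ℝ, u = fun x =>
      (f (Fin.cons true x) + f (Fin.cons false (khNeg x))) / 2 := ⟨_, rfl⟩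
    obtain ⟨w, hw⟩ : ∃ w : (Fin n → Bool) → ℝ, w = fun x =>
      (f (Fin.cons true x) - f (Fin.cons false (khNeg x))) / 2 := ⟨_, rfl⟩
    have hg : ∀ x, f (Fin.cons true x) = u x + w x := fun x => by simp only [hu, hw]; ring
    have hh' : ∀ x, f (Fin.cons false (khNeg x)) = u x - w x := fun x => by simp only [hu, hw]; ring
    have hh : ∀ x, f (Fin.cons false x) = u (khNeg x) - w (khNeg x) := fun x => by
      rw [← hh', khNeg_neg]
    clear hu hw
    have hD : khD f = 2 * khD u + 2 * khD w
        + 2 * ∑ x : Fin n → Bool, ((u x + w x) - (u (khNeg x) - w (khNeg x))) ^ 2 := by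
      rw [khD_cons]
      simp only [hg, hh]
      rw [khD_neg (fun x => u x - w x), khD_para]
    rw [hD]
    simp only [kh_sum_cons, khNeg_cons, Bool.not_true, Bool.not_false, hg, hh, khNeg_neg]
    have e1 := kh_sum_neg (fun x => (u x - w x) ^ 2)
    have e2 := kh_sum_neg (fun x => (u x - w x))
    have e3 := kh_sum_neg (fun x => (u x - w x - (u x + w x)) ^ 2)
    rw [e1, e2, e3]
    have hiu := ih u
    have hiw := ih w
    have a1 : ∑ x, (u x + w x) ^ 2 + ∑ x, (u x - w x) ^ 2 = 2 * ∑ x, u x ^ 2 + 2 * ∑ x, w x ^ 2 := by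
      simp only [Finset.mul_sum, ← Finset.sum_add_distrib]
      exact Finset.sum_congr rfl fun x _ => by ring
    have a2 : ∑ x, (u x + w x) + ∑ x, (u x - w x) = 2 * ∑ x, u x := by
      simp only [Finset.mul_sum, ← Finset.sum_add_distrib]
      exact Finset.sum_congr rfl fun x _ => by ring
    have a3 : ∑ x, (u x + w x - (u x - w x)) ^ 2 = 4 * ∑ x, w x ^ 2 := by
      simp only [Finset.mul_sum]
      exact Finset.sum_congr rfl fun x _ => by ring
    have a3' : ∑ x, (u x - w x - (u x + w x)) ^ 2 = 4 * ∑ x, w x ^ 2 := by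
      simp only [Finset.mul_sum]
      exact Finset.sum_congr rfl fun x _ => by ring
    have c0 : ∑ x, (u x - u (khNeg x)) * (w x + w (khNeg x)) = 0 := by
      have := kh_sum_neg (fun x => (u x - u (khNeg x)) * (w x + w (khNeg x)))
      simp only [khNeg_neg] at this
      have h2 : ∑ x, (u (khNeg x) - u x) * (w (khNeg x) + w x)
        = - ∑ x, (u x - u (khNeg x)) * (w x + w (khNeg x)) := by
        rw [← Finset.sum_neg_distrib]
        exact Finset.sum_congr rfl fun x _ => by ring
      linarith
    have a4 : ∑ x, (u x + w x - (u (khNeg x) - w (khNeg x))) ^ 2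
        = ∑ x, (u x - u (khNeg x)) ^ 2 + ∑ x, (w x + w (khNeg x)) ^ 2
          + 2 * ∑ x, (u x - u (khNeg x)) * (w x + w (khNeg x)) := by
      simp only [Finset.mul_sum, ← Finset.sum_add_distrib]
      exact Finset.sum_congr rfl fun x _ => by ring
    have a5 : ∑ x, (w x + w (khNeg x)) ^ 2 + ∑ x, (w x - w (khNeg x)) ^ 2 = 4 * ∑ x, w x ^ 2 := by
      have := kh_sum_neg (fun x => w x ^ 2)
      have h2 : ∑ x, (w x + w (khNeg x)) ^ 2 + ∑ x, (w x - w (khNeg x)) ^ 2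
        = 2 * ∑ x, w x ^ 2 + 2 * ∑ x, w (khNeg x) ^ 2 := by
        simp only [Finset.mul_sum, ← Finset.sum_add_distrib]
        exact Finset.sum_congr rfl fun x _ => by ring
      linarith
    have a6 := kh_cs (fun x => w x + w (khNeg x))
    have a7 : ∑ x, (w x + w (khNeg x)) = 2 * ∑ x, w x := by
      have := kh_sum_neg w
      rw [Finset.sum_add_distrib, this]; ring
    simp only [a7] at a6
    rw [a1, a2, a3, a3', a4, c0]
    have p1 : (2 * ∑ x, u x) ^ 2 / 2 ^ (n+1) = 2 * ((∑ x, u x) ^ 2 / 2 ^ n) := by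
      field_simp; ring
    have p2 : (2 * ∑ x, w x) ^ 2 / 2 ^ n = 4 * ((∑ x, w x) ^ 2 / 2 ^ n) := by
      field_simp; ring
    rw [p1]
    rw [p2] at a6
    linarith

def khS {n : ℕ} (a : Fin n → ℝ) (e : Fin n → Bool) : ℝ := ∑ i, (if e i then (1:ℝ) else -1) * a i

lemma khS_sq : ∀ (n : ℕ) (a : Fin n → ℝ), ∑ e, khS a e ^ 2 = 2 ^ n * ∑ i, a i ^ 2 := by
  intro n
  induction n with
  | zero => intro a; simp [khS]
  | succ n ih =>
    intro a
    have := ih (fun i => a i.succ)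
    have h1 : ∀ x : Fin n → Bool, khS a (Fin.cons true x) = a 0 + khS (fun i => a i.succ) x := by
      intro x; simp [khS, Fin.sum_univ_succ]
    have h2 : ∀ x : Fin n → Bool, khS a (Fin.cons false x) = -a 0 + khS (fun i => a i.succ) x := by
      intro x; simp [khS, Fin.sum_univ_succ]
    rw [kh_sum_cons, ← Finset.sum_add_distrib]
    simp only [h1, h2]
    have : ∑ x : Fin n → Bool, ((a 0 + khS (fun i => a i.succ) x) ^ 2
        + (-a 0 + khS (fun i => a i.succ) x) ^ 2)
        = ∑ x : Fin n → Bool, 2 * a 0 ^ 2 + 2 * ∑ x, khS (fun i => a i.succ) x ^ 2 := by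
      simp only [Finset.mul_sum, ← Finset.sum_add_distrib]
      exact Finset.sum_congr rfl fun x _ => by ring
    rw [this, ih, Fin.sum_univ_succ]
    simp
    ring

lemma khS_neg {n : ℕ} (a : Fin n → ℝ) (e : Fin n → Bool) : khS a (khNeg e) = - khS a e := by
  unfold khS khNeg
  rw [← Finset.sum_neg_distrib]
  refine Finset.sum_congr rfl fun i _ => ?_
  cases e i <;> simp

lemma khS_flip {n : ℕ} (a : Fin n → ℝ) (i : Fin n) (e : Fin n → Bool) :
    khS a (khFlip i e) = khS a e - 2 * ((if e i then (1:ℝ) else -1) * a i) := by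
  have : khS a (khFlip i e) - khS a e = - 2 * ((if e i then (1:ℝ) else -1) * a i) := by
    unfold khS
    rw [← Finset.sum_sub_distrib, Finset.sum_eq_single i]
    · cases h : e i <;> simp [khFlip, h] <;> ring
    · intro j _ hj; simp [khFlip, hj]
    · simp
  linarith

lemma khintchine {n : ℕ} (a : Fin n → ℝ) :
    Real.sqrt (∑ i, a i ^ 2) ≤ Real.sqrt 2 * ((∑ e, |khS a e|) / 2 ^ n) := by
  have hp := kh_poincare n (fun e => |khS a e|)
  simp only [khS_neg, abs_neg, sub_self, sq_abs] at hp
  have hD : khD (fun e => |khS a e|) ≤ 4 * ∑ e, khS a e ^ 2 := by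
    have e1 : khD (fun e => |khS a e|) = ∑ i, ∑ e, 2 * (khS a e ^ 2 - |khS a e| * |khS a (khFlip i e)|) := by
      unfold khD
      refine Finset.sum_congr rfl fun i _ => ?_
      have := kh_sum_flip i (fun e => khS a e ^ 2)
      have h2 : ∑ e, (|khS a e| - |khS a (khFlip i e)|) ^ 2 = ∑ e, khS a e ^ 2
        + ∑ e, khS a (khFlip i e) ^ 2 - ∑ e, 2 * (|khS a e| * |khS a (khFlip i e)|) := by
        rw [← Finset.sum_add_distrib, ← Finset.sum_sub_distrib]
        refine Finset.sum_congr rfl fun e _ => ?_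
        rw [← sq_abs (khS a e), ← sq_abs (khS a (khFlip i e))]; ring
      rw [h2, this, ← Finset.sum_add_distrib, ← Finset.sum_sub_distrib]
      exact Finset.sum_congr rfl fun e _ => by ring
    rw [e1, Finset.sum_comm, Finset.mul_sum]
    refine Finset.sum_le_sum fun e _ => ?_
    rw [← Finset.mul_sum, Finset.sum_sub_distrib, ← Finset.mul_sum]
    have h3 : ((n:ℝ) - 2) * |khS a e| ≤ ∑ i, |khS a (khFlip i e)| := by
      have h4 : ∑ i, khS a (khFlip i e) = ((n:ℝ) - 2) * khS a e := by
        simp only [khS_flip, Finset.sum_sub_distrib, ← Finset.mul_sum]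
        simp [khS]; ring
      calc ((n:ℝ) - 2) * |khS a e| ≤ |(n:ℝ) - 2| * |khS a e| := by gcongr; exact le_abs_self _
        _ = |∑ i, khS a (khFlip i e)| := by rw [h4, abs_mul]
        _ ≤ _ := Finset.abs_sum_le_sum_abs _ _
    have h5 := mul_le_mul_of_nonneg_left h3 (abs_nonneg (khS a e))
    have h6 := sq_abs (khS a e)
    simp
    nlinarith
  have h0 : (∑ e : Fin n → Bool, (0:ℝ) ^ 2) = 0 := by simp
  rw [h0, khS_sq] at hp
  rw [khS_sq] at hD
  have hE : 0 ≤ (∑ e, |khS a e|) / 2 ^ n := by positivity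
  have h2n : (0:ℝ) < 2 ^ n := by positivity
  have hkey : ∑ i, a i ^ 2 ≤ 2 * ((∑ e, |khS a e|) / 2 ^ n) ^ 2 := by
    have : 2 ^ n * ∑ i, a i ^ 2 ≤ 2 ^ n * (2 * ((∑ e, |khS a e|) / 2 ^ n) ^ 2) := by
      have e : (2:ℝ) ^ n * (2 * ((∑ e, |khS a e|) / 2 ^ n) ^ 2) = 2 * ((∑ e, |khS a e|) ^ 2 / 2 ^ n) := by
        field_simp
      rw [e]; linarith
    exact le_of_mul_le_mul_left this h2n
  calc Real.sqrt (∑ i, a i ^ 2) ≤ Real.sqrt (2 * ((∑ e, |khS a e|) / 2 ^ n) ^ 2) := Real.sqrt_le_sqrt hkey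
    _ = _ := by rw [Real.sqrt_mul (by norm_num), Real.sqrt_sq hE]

def solidD (n : ℕ) : Set (Fin n → ℝ) := {x | (∀ i, 0 ≤ x i) ∧ ∑ i, x i ≤ 1}

lemma solidD_closed (n : ℕ) : IsClosed (solidD n) := by
  have h : solidD n = (⋂ i, {x | 0 ≤ x i}) ∩ {x | ∑ i, x i ≤ 1} := by
    ext x; simp [solidD]
  rw [h]
  refine IsClosed.inter (isClosed_iInter fun i => ?_) ?_
  · exact isClosed_le continuous_const (continuous_apply i)
  · exact isClosed_le (by fun_prop) continuous_const

lemma solidD_compact (n : ℕ) : IsCompact (solidD n) := by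
  refine (isCompact_Icc (a := (0 : Fin n → ℝ)) (b := 1)).of_isClosed_subset (solidD_closed n) ?_
  intro x hx
  refine ⟨hx.1, fun i => ?_⟩
  exact (Finset.single_le_sum (f := x) (fun j _ => hx.1 j) (Finset.mem_univ i)).trans hx.2

noncomputable def expw : ℝ → ℝ := (Set.Ici 0).indicator (fun t => Real.exp (-t))

lemma expw_meas : Measurable expw :=
  (Real.measurable_exp.comp measurable_neg).indicator measurableSet_Ici

lemma expw_nonneg (t : ℝ) : 0 ≤ expw t := by
  unfold expw; exact Set.indicator_nonneg (fun _ _ => (Real.exp_pos _).le) _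

lemma gammaInt (k : ℕ) : IntegrableOn (fun t : ℝ => Real.exp (-t) * t ^ k) (Set.Ioi 0) ∧
    ∫ t in Set.Ioi (0:ℝ), Real.exp (-t) * t ^ k = k.factorial := by
  have h1 := Real.GammaIntegral_convergent (s := (k:ℝ) + 1) (by positivity)
  have h2 := Real.Gamma_eq_integral (s := (k:ℝ) + 1) (by positivity)
  simp only [add_sub_cancel_right, Real.rpow_natCast] at h1 h2
  refine ⟨h1, ?_⟩
  rw [← h2, Real.Gamma_nat_eq_factorial]

lemma expw_moment (k : ℕ) : Integrable (fun t : ℝ => expw t * t ^ k) ∧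
    ∫ t, expw t * t ^ k = k.factorial := by
  have e : (fun t : ℝ => expw t * t ^ k) = (Set.Ici 0).indicator (fun t => Real.exp (-t) * t ^ k) := by
    funext t
    unfold expw
    by_cases h : t ∈ Set.Ici (0:ℝ) <;> simp [Set.indicator, h]
  rw [e]
  constructor
  · rw [integrable_indicator_iff measurableSet_Ici, integrableOn_Ici_iff_integrableOn_Ioi]
    exact (gammaInt k).1
  · rw [integral_indicator measurableSet_Ici, integral_Ici_eq_integral_Ioi]
    exact (gammaInt k).2

lemma expw_centered (k : ℕ) (hk : k ≤ 2) : Integrable (fun t : ℝ => expw t * (t - 1) ^ k) ∧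
    ∫ t, expw t * (t - 1) ^ k = if k = 1 then 0 else 1 := by
  obtain ⟨i0, m0⟩ := expw_moment 0
  obtain ⟨i1, m1⟩ := expw_moment 1
  obtain ⟨i2, m2⟩ := expw_moment 2
  interval_cases k
  · exact ⟨by simpa using i0, by simpa using m0⟩
  · have e : (fun t : ℝ => expw t * (t - 1) ^ 1) = fun t => expw t * t ^ 1 - expw t * t ^ 0 := by
      funext t; ring
    rw [e]
    refine ⟨i1.sub i0, ?_⟩
    rw [integral_sub i1 i0, m0, m1]; simp
  · have e : (fun t : ℝ => expw t * (t - 1) ^ 2) =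
        fun t => (expw t * t ^ 2 - 2 * (expw t * t ^ 1)) + expw t * t ^ 0 := by
      funext t; ring
    rw [e]
    have h1 := i1.const_mul 2
    refine ⟨(i2.sub h1).add i0, ?_⟩
    have h2 := integral_add (i2.sub h1) i0
    have h3 := integral_sub i2 h1
    simp only [Pi.sub_apply] at h2
    rw [h2, h3, integral_const_mul, m0, m1, m2]; norm_num

noncomputable def expW {n : ℕ} (x : Fin n → ℝ) : ℝ := ∏ i, expw (x i)

lemma expW_nonneg {n : ℕ} (x : Fin n → ℝ) : 0 ≤ expW x :=
  Finset.prod_nonneg fun i _ => expw_nonneg _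

lemma expW_meas {n : ℕ} : Measurable (expW (n := n)) := by
  unfold expW
  exact Finset.measurable_prod _ fun i _ => expw_meas.comp (measurable_pi_apply i)

lemma expW_int (n : ℕ) : Integrable (expW (n := n)) ∧ ∫ x, expW (n := n) x = 1 := by
  have h := expw_moment 0
  simp at h
  constructor
  · exact Integrable.fintype_prod (f := fun _ : Fin n => expw) fun i => h.1
  · unfold expW
    rw [integral_fintype_prod_volume_eq_prod (fun _ : Fin n => expw)]
    simp [h.2]

lemma expW_cov {n : ℕ} (i j : Fin n) :
    Integrable (fun x : Fin n → ℝ => expW x * ((x i - 1) * (x j - 1))) ∧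
    ∫ x : Fin n → ℝ, expW x * ((x i - 1) * (x j - 1)) = if i = j then 1 else 0 := by
  let c : Fin n → ℕ := fun k => (if k = i then 1 else 0) + (if k = j then 1 else 0)
  have hc : ∀ k, c k ≤ 2 := fun k => by simp only [c]; split_ifs <;> omega
  have e : (fun x : Fin n → ℝ => expW x * ((x i - 1) * (x j - 1)))
      = fun x => ∏ k, (expw (x k) * (x k - 1) ^ c k) := by
    funext x
    rw [Finset.prod_mul_distrib]
    congr 1
    simp only [c, pow_add, Finset.prod_mul_distrib, Finset.prod_pow_boole]
    simp
  rw [e]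
  constructor
  · exact Integrable.fintype_prod (f := fun k t => expw t * (t - 1) ^ c k)
      fun k => (expw_centered (c k) (hc k)).1
  · rw [integral_fintype_prod_volume_eq_prod (fun k t => expw t * (t - 1) ^ c k)]
    simp only [(expw_centered (c _) (hc _)).2]
    split_ifs with h
    · refine Finset.prod_eq_one fun k _ => ?_
      rw [if_neg]; simp only [c, h]; split_ifs <;> omega
    · refine Finset.prod_eq_zero (Finset.mem_univ i) ?_
      rw [if_pos]; simp [c, h]

lemma expW_sq {n : ℕ} (a : Fin n → ℝ) :
    Integrable (fun x : Fin n → ℝ => expW x * (∑ i, a i * (x i - 1)) ^ 2) ∧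
    ∫ x : Fin n → ℝ, expW x * (∑ i, a i * (x i - 1)) ^ 2 = ∑ i, a i ^ 2 := by
  have e : (fun x : Fin n → ℝ => expW x * (∑ i, a i * (x i - 1)) ^ 2)
      = fun x => ∑ i, ∑ j, (a i * a j) * (expW x * ((x i - 1) * (x j - 1))) := by
    funext x
    rw [sq, Finset.sum_mul_sum, Finset.mul_sum]
    refine Finset.sum_congr rfl fun i _ => ?_
    rw [Finset.mul_sum]
    exact Finset.sum_congr rfl fun j _ => by ring
  have hi : ∀ i j, Integrable (fun x : Fin n → ℝ => (a i * a j) * (expW x * ((x i - 1) * (x j - 1)))) :=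
    fun i j => (expW_cov i j).1.const_mul _
  rw [e]
  constructor
  · exact integrable_finsetSum _ fun i _ => integrable_finsetSum _ fun j _ => hi i j
  · rw [integral_finsetSum _ fun i _ => integrable_finsetSum _ fun j _ => hi i j]
    refine Finset.sum_congr rfl fun i _ => ?_
    rw [integral_finsetSum _ fun j _ => hi i j]
    simp only [integral_const_mul, (expW_cov i _).2]
    simp [sq]

lemma expW_abs {n : ℕ} (a : Fin n → ℝ) :
    ∫⁻ x : Fin n → ℝ, ENNReal.ofReal |∑ i, a i * x i| * ENNReal.ofReal (expW x)
      ≤ ENNReal.ofReal (Real.sqrt (∑ i, a i ^ 2) + |∑ i, a i|) := by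
  set c := Real.sqrt (∑ i, a i ^ 2) with hc
  have hs : 0 ≤ ∑ i, a i ^ 2 := Finset.sum_nonneg fun i _ => sq_nonneg _
  have hcs : c ^ 2 = ∑ i, a i ^ 2 := Real.sq_sqrt hs
  rcases (Real.sqrt_nonneg (∑ i, a i ^ 2)).eq_or_lt with h0 | hpos
  · have : ∑ i, a i ^ 2 = 0 := by
      rw [← hcs, hc, ← h0]; simp
    have ha : ∀ i, a i = 0 := by
      intro i
      have := (Finset.sum_eq_zero_iff_of_nonneg (fun i _ => sq_nonneg (a i))).1 this i (Finset.mem_univ _)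
      simpa using this
    simp [ha]
  · have hcpos : 0 < c := hpos
    obtain ⟨i1, m1⟩ := expW_sq a
    obtain ⟨i0, m0⟩ := expW_int n
    have hint := (i1.const_mul (1/(2*c))).add (i0.const_mul (c/2 + |∑ i, a i|))
    have hval : ∫ x : Fin n → ℝ, ((fun x : Fin n → ℝ => (1/(2*c)) * (expW x * (∑ i, a i * (x i - 1)) ^ 2)) +
        (fun x : Fin n → ℝ => (c/2 + |∑ i, a i|) * expW x) : (Fin n → ℝ) → ℝ) x = c + |∑ i, a i| := by
      rw [integral_add' (i1.const_mul (1/(2*c))) (i0.const_mul (c/2 + |∑ i, a i|)),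
        integral_const_mul, integral_const_mul, m1, m0, ← hcs]
      field_simp; ring
    rw [← hval, ofReal_integral_eq_lintegral_ofReal hint]
    · refine lintegral_mono fun x => ?_
      rw [← ENNReal.ofReal_mul (abs_nonneg _)]
      refine ENNReal.ofReal_le_ofReal ?_
      have e : ∑ i, a i * x i = ∑ i, a i * (x i - 1) + ∑ i, a i := by
        rw [← Finset.sum_add_distrib]; exact Finset.sum_congr rfl fun i _ => by ring
      have h1 : |∑ i, a i * x i| ≤ |∑ i, a i * (x i - 1)| + |∑ i, a i| := by
        rw [e]; exact abs_add_le _ _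
      set y := ∑ i, a i * (x i - 1)
      have h2 : |y| ≤ 1/(2*c) * y ^ 2 + c/2 := by
        have : 0 ≤ (|y| - c) ^ 2 / (2 * c) := by positivity
        have e2 : (|y| - c) ^ 2 / (2 * c) = 1/(2*c) * y ^ 2 + c/2 - |y| := by
          rw [← sq_abs y]; field_simp; ring
        linarith
      have h3 := mul_le_mul_of_nonneg_right (h1.trans (add_le_add_left h2 |∑ i, a i|)) (expW_nonneg x)
      simp only [Pi.add_apply]
      linarith
    · filter_upwards with x
      have := expW_nonneg x
      simp only [Pi.add_apply, Pi.zero_apply]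
      positivity

lemma expW_layer {n : ℕ} (x : Fin n → ℝ) : ENNReal.ofReal (expW x) =
    ∫⁻ t in Set.Ioi (0:ℝ), ENNReal.ofReal (Real.exp (-t)) *
      ({x : Fin n → ℝ | (∀ i, 0 ≤ x i) ∧ ∑ i, x i ≤ t}.indicator 1 x) := by
  by_cases hx : ∀ i, 0 ≤ x i
  · have hs : 0 ≤ ∑ i, x i := Finset.sum_nonneg fun i _ => hx i
    have e1 : expW x = Real.exp (-∑ i, x i) := by
      unfold expW expw
      rw [← Finset.sum_neg_distrib, Real.exp_sum]
      exact Finset.prod_congr rfl fun i _ => by simp [hx i]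
    have e2 : ∀ t : ℝ, ENNReal.ofReal (Real.exp (-t)) *
      ({x : Fin n → ℝ | (∀ i, 0 ≤ x i) ∧ ∑ i, x i ≤ t}.indicator 1 x)
      = (Set.Ici (∑ i, x i)).indicator (fun t => ENNReal.ofReal (Real.exp (-t))) t := by
      intro t
      by_cases h : ∑ i, x i ≤ t <;> simp [Set.indicator, hx, h]
    simp only [e2]
    rw [lintegral_indicator measurableSet_Ici, Measure.restrict_restrict measurableSet_Ici]
    have e3 : (volume.restrict (Set.Ici (∑ i, x i) ∩ Set.Ioi (0:ℝ)) : Measure ℝ)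
        = volume.restrict (Set.Ioi (∑ i, x i)) := by
      refine Measure.restrict_congr_set ?_
      have h4 : (Set.Ioi (∑ i, x i) ∩ Set.Ioi (0:ℝ)) = Set.Ioi (∑ i, x i) :=
        Set.inter_eq_left.2 fun t ht => lt_of_le_of_lt hs ht
      have h5 : (Set.Ici (∑ i, x i) : Set ℝ) =ᵐ[volume] Set.Ioi (∑ i, x i) := Ioi_ae_eq_Ici.symm
      have := h5.inter (Filter.EventuallyEq.refl _ (Set.Ioi (0:ℝ)))
      rwa [h4] at this
    rw [e3, e1, ← integral_exp_neg_Ioi, ofReal_integral_eq_lintegral_ofReal]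
    · exact integrableOn_exp_neg_Ioi _
    · filter_upwards with t using (Real.exp_pos _).le
  · have h1 : expW x = 0 := by
      push Not at hx
      obtain ⟨i, hi⟩ := hx
      refine Finset.prod_eq_zero (Finset.mem_univ i) ?_
      simp [expw, hi]
    simp [h1, Set.indicator, hx]

lemma simplex_scale {n d : ℕ} (F : (Fin n → ℝ) → ENNReal) (hF : Measurable F)
    (hh : ∀ t : ℝ, 0 < t → ∀ x, F (t • x) = ENNReal.ofReal (t ^ d) * F x) (t : ℝ) (ht : 0 < t) :
    ∫⁻ x, F x * ({x : Fin n → ℝ | (∀ i, 0 ≤ x i) ∧ ∑ i, x i ≤ t}.indicator 1 x) =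
      ENNReal.ofReal (t ^ (n + d)) * ∫⁻ x in solidD n, F x := by
  have hm := Measure.map_addHaar_smul (volume : Measure (Fin n → ℝ)) (inv_ne_zero ht.ne')
  have hS : MeasurableSet (solidD n) := (solidD_closed n).measurableSet
  have e : ∀ x, F x * ({x : Fin n → ℝ | (∀ i, 0 ≤ x i) ∧ ∑ i, x i ≤ t}.indicator 1 x) =
      (fun y => ENNReal.ofReal (t ^ d) * (solidD n).indicator F y) (t⁻¹ • x) := by
    intro x
    have h1 : t⁻¹ • x ∈ solidD n ↔ x ∈ {x : Fin n → ℝ | (∀ i, 0 ≤ x i) ∧ ∑ i, x i ≤ t} := by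
      simp only [solidD, Set.mem_ofPred_eq, Pi.smul_apply, smul_eq_mul, ← Finset.mul_sum]
      refine and_congr (forall_congr' fun i => ?_) ?_
      · exact mul_nonneg_iff_of_pos_left (inv_pos.2 ht)
      · rw [inv_mul_le_iff₀ ht, mul_one]
    have h2 : F x = ENNReal.ofReal (t ^ d) * F (t⁻¹ • x) := by
      rw [← hh t ht, smul_inv_smul₀ ht.ne']
    by_cases h : x ∈ {x : Fin n → ℝ | (∀ i, 0 ≤ x i) ∧ ∑ i, x i ≤ t}
    · rw [Set.indicator_of_mem h]
      simp only [Set.indicator_of_mem (h1.2 h)]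
      rw [← h2]; simp
    · rw [Set.indicator_of_notMem h]
      simp only [Set.indicator_of_notMem (fun h' => h (h1.1 h'))]
      simp
  simp only [e]
  have hmeas : Measurable (fun y => ENNReal.ofReal (t ^ d) * (solidD n).indicator F y) :=
    (hF.indicator hS).const_mul _
  rw [← lintegral_map (μ := volume) hmeas (measurable_const_smul t⁻¹), hm, lintegral_smul_measure,
    lintegral_const_mul _ (hF.indicator hS), lintegral_indicator hS, smul_eq_mul, ← mul_assoc,
    ← ENNReal.ofReal_mul (abs_nonneg _)]
  congr 2
  simp
  rw [abs_of_pos ht, pow_add]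

lemma simplex_homog {n d : ℕ} (F : (Fin n → ℝ) → ENNReal) (hF : Measurable F)
    (hh : ∀ t : ℝ, 0 < t → ∀ x, F (t • x) = ENNReal.ofReal (t ^ d) * F x) :
    ∫⁻ x, F x * ENNReal.ofReal (expW x) =
      ENNReal.ofReal ((n + d).factorial) * ∫⁻ x in solidD n, F x := by
  have hmS : MeasurableSet {p : (Fin n → ℝ) × ℝ | (∀ i, 0 ≤ p.1 i) ∧ ∑ i, p.1 i ≤ p.2} := by
    refine MeasurableSet.inter ?_ ?_
    · have : {p : (Fin n → ℝ) × ℝ | ∀ i, 0 ≤ p.1 i} = ⋂ i, {p | 0 ≤ p.1 i} := by ext; simp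
      exact (this ▸ MeasurableSet.iInter fun i => measurableSet_le measurable_const (by fun_prop) :)
    · exact measurableSet_le (f := fun p : (Fin n → ℝ) × ℝ => ∑ i, p.1 i)
        (g := fun p : (Fin n → ℝ) × ℝ => p.2) (by fun_prop) (by fun_prop)
  have hm2 : Measurable (fun p : (Fin n → ℝ) × ℝ =>
      ({x : Fin n → ℝ | (∀ i, 0 ≤ x i) ∧ ∑ i, x i ≤ p.2}.indicator (1 : (Fin n → ℝ) → ENNReal) p.1)) := by
    have := (measurable_one (α := ENNReal) (β := (Fin n → ℝ) × ℝ)).indicator hmS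
    exact this
  have hm3 : ∀ x : Fin n → ℝ, Measurable (fun t : ℝ => ENNReal.ofReal (Real.exp (-t)) *
      ({x : Fin n → ℝ | (∀ i, 0 ≤ x i) ∧ ∑ i, x i ≤ t}.indicator (1 : (Fin n → ℝ) → ENNReal) x)) :=
    fun x => Measurable.mul (by fun_prop) (hm2.comp (measurable_const.prodMk measurable_id))
  have hm4 : ∀ t : ℝ, Measurable (fun x : Fin n → ℝ => F x *
      ({x : Fin n → ℝ | (∀ i, 0 ≤ x i) ∧ ∑ i, x i ≤ t}.indicator (1 : (Fin n → ℝ) → ENNReal) x)) :=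
    fun t => hF.mul (hm2.comp (measurable_id.prodMk measurable_const))
  calc ∫⁻ x, F x * ENNReal.ofReal (expW x)
      = ∫⁻ x, ∫⁻ t in Set.Ioi (0:ℝ), F x * (ENNReal.ofReal (Real.exp (-t)) *
      ({x : Fin n → ℝ | (∀ i, 0 ≤ x i) ∧ ∑ i, x i ≤ t}.indicator 1 x)) := by
        refine lintegral_congr fun x => ?_
        rw [expW_layer, lintegral_const_mul _ (hm3 x)]
    _ = ∫⁻ t in Set.Ioi (0:ℝ), ∫⁻ x, F x * (ENNReal.ofReal (Real.exp (-t)) *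
      ({x : Fin n → ℝ | (∀ i, 0 ≤ x i) ∧ ∑ i, x i ≤ t}.indicator 1 x)) := by
        refine lintegral_lintegral_swap (Measurable.aemeasurable ?_)
        exact (hF.comp measurable_fst).mul (Measurable.mul (by fun_prop) hm2)
    _ = ∫⁻ t in Set.Ioi (0:ℝ), ENNReal.ofReal (Real.exp (-t) * t ^ (n + d)) *
          ∫⁻ x in solidD n, F x := by
        refine setLIntegral_congr_fun measurableSet_Ioi fun t ht => ?_
        have : ∀ x, F x * (ENNReal.ofReal (Real.exp (-t)) *
          ({x : Fin n → ℝ | (∀ i, 0 ≤ x i) ∧ ∑ i, x i ≤ t}.indicator 1 x)) =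
          ENNReal.ofReal (Real.exp (-t)) * (F x *
          ({x : Fin n → ℝ | (∀ i, 0 ≤ x i) ∧ ∑ i, x i ≤ t}.indicator 1 x)) := fun x => by ring
        simp only [this]
        rw [lintegral_const_mul _ (hm4 t), simplex_scale F hF hh t ht, ← mul_assoc,
          ← ENNReal.ofReal_mul (Real.exp_pos _).le]
    _ = _ := by
        rw [lintegral_mul_const _ (by fun_prop), ← ofReal_integral_eq_lintegral_ofReal (gammaInt _).1,
          (gammaInt _).2]
        filter_upwards [ae_restrict_mem measurableSet_Ioi] with t ht
        have : (0:ℝ) < t := ht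
        simp only [Pi.zero_apply]
        positivity

lemma simplex_bound {n : ℕ} (a : Fin n → ℝ) :
    ∫⁻ x in solidD n, ENNReal.ofReal |∑ i, a i * x i| ≤
      ENNReal.ofReal ((Real.sqrt (∑ i, a i ^ 2) + |∑ i, a i|) / (n + 1)) * volume (solidD n) := by
  have h1 := simplex_homog (n := n) (d := 1) (fun x => ENNReal.ofReal |∑ i, a i * x i|) (by fun_prop)
    (by
      intro t ht x
      rw [← ENNReal.ofReal_mul (by positivity)]
      congr 1
      have : ∑ i, a i * (t • x) i = t * ∑ i, a i * x i := by
        rw [Finset.mul_sum]; exact Finset.sum_congr rfl fun i _ => by simp; ring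
      rw [this, abs_mul, abs_of_pos ht, pow_one])
  have h0 := simplex_homog (n := n) (d := 0) (fun x => 1) (by fun_prop) (by intro t ht x; simp)
  have hb := expW_abs a
  rw [h1] at hb
  have hone : ∫⁻ x : Fin n → ℝ, 1 * ENNReal.ofReal (expW x) = 1 := by
    simp only [one_mul]
    rw [← ofReal_integral_eq_lintegral_ofReal (expW_int n).1 (by filter_upwards with x using expW_nonneg x),
      (expW_int n).2, ENNReal.ofReal_one]
  rw [hone] at h0
  simp only [setLIntegral_one, add_zero] at h0
  set B := Real.sqrt (∑ i, a i ^ 2) + |∑ i, a i|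
  set I := ∫⁻ x in solidD n, ENNReal.ofReal |∑ i, a i * x i|
  have hf1 : (0:ℝ) < (n+1).factorial := by exact_mod_cast Nat.factorial_pos _
  have hne : ENNReal.ofReal ((n+1).factorial) ≠ 0 := by simpa using Nat.factorial_ne_zero _
  refine (ENNReal.mul_le_mul_iff_right hne ENNReal.ofReal_ne_top).1 ?_
  calc _ ≤ ENNReal.ofReal B := hb
    _ = ENNReal.ofReal B * (ENNReal.ofReal (n.factorial) * volume (solidD n)) := by rw [← h0, mul_one]
    _ = _ := by
      rw [← mul_assoc, ← mul_assoc, ← ENNReal.ofReal_mul (by positivity), ← ENNReal.ofReal_mul (by positivity)]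
      congr 2
      rw [Nat.factorial_succ]; push_cast; field_simp

noncomputable def cellMap {n : ℕ} (y : Fin n → Fin n → ℝ) : (Fin n → ℝ) →ₗ[ℝ] (Fin n → ℝ) :=
  Fintype.linearCombination ℝ y

lemma cellMap_apply {n : ℕ} (y : Fin n → Fin n → ℝ) (x : Fin n → ℝ) (j : Fin n) :
    cellMap y x j = ∑ i, y i j * x i := by
  simp [cellMap, Fintype.linearCombination_apply, mul_comm]

def cell {n : ℕ} (y : Fin n → Fin n → ℝ) : Set (Fin n → ℝ) := cellMap y '' solidD n

lemma cell_compact {n : ℕ} (y : Fin n → Fin n → ℝ) : IsCompact (cell y) :=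
  (solidD_compact n).image (cellMap y).continuous_of_finiteDimensional

lemma coef_bound {n : ℕ} (hn : 1 ≤ n) (y : Fin n → Fin n → ℝ) (M : ℝ)
    (hM : ∀ e : Fin n → Bool, ∑ j, |∑ i, (if e i then (1:ℝ) else -1) * y i j| ≤ M) :
    ∑ j, (Real.sqrt (∑ i, y i j ^ 2) + |∑ i, y i j|) / (n + 1) ≤ (1 + Real.sqrt 2) / n * M := by
  have hM0 : 0 ≤ M := le_trans (Finset.sum_nonneg fun j _ => abs_nonneg _) (hM fun _ => true)
  have h1 : ∑ j, |∑ i, y i j| ≤ M := by simpa using hM fun _ => true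
  have h2 : ∑ j, Real.sqrt (∑ i, y i j ^ 2) ≤ Real.sqrt 2 * M := by
    calc ∑ j, Real.sqrt (∑ i, y i j ^ 2)
        ≤ ∑ j, Real.sqrt 2 * ((∑ e, |khS (fun i => y i j) e|) / 2 ^ n) :=
          Finset.sum_le_sum fun j _ => khintchine _
      _ = Real.sqrt 2 * ((∑ e : Fin n → Bool, ∑ j, |khS (fun i => y i j) e|) / 2 ^ n) := by
          rw [← Finset.mul_sum, ← Finset.sum_div, Finset.sum_comm]
      _ ≤ Real.sqrt 2 * ((∑ e : Fin n → Bool, M) / 2 ^ n) := by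
          gcongr with e _
          exact hM e
      _ = Real.sqrt 2 * M := by simp
  have hn' : (0:ℝ) < n := by exact_mod_cast hn
  rw [← Finset.sum_div, Finset.sum_add_distrib, div_mul_eq_mul_div]
  have h3 : 0 ≤ Real.sqrt 2 * M := by positivity
  apply div_le_div₀ (by positivity) (by linarith) hn' (by linarith)

lemma cell_bound {n : ℕ} (hn : 1 ≤ n) (y : Fin n → Fin n → ℝ) (M : ℝ)
    (hM : ∀ e : Fin n → Bool, ∑ j, |∑ i, (if e i then (1:ℝ) else -1) * y i j| ≤ M) :
    ∫⁻ x in cell y, ENNReal.ofReal (∑ j, |x j|) ≤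
      ENNReal.ofReal ((1 + Real.sqrt 2) / n * M) * volume (cell y) := by
  have hvol : volume (cell y) = ENNReal.ofReal |LinearMap.det (cellMap y)| * volume (solidD n) :=
    Measure.addHaar_image_linearMap _ _ _
  by_cases hdet : LinearMap.det (cellMap y) = 0
  · have h0 : volume (cell y) = 0 := by rw [hvol, hdet]; simp
    rw [setLIntegral_measure_zero _ _ h0]; exact zero_le
  · have hinj : Function.Injective (cellMap y) :=
      (LinearMap.equivOfDetNeZero (cellMap y) hdet).injective
    have hS : MeasurableSet (solidD n) := (solidD_closed n).measurableSet
    let L : (Fin n → ℝ) →L[ℝ] (Fin n → ℝ) := LinearMap.toContinuousLinearMap (cellMap y)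
    have hcv := lintegral_image_eq_lintegral_abs_det_fderiv_mul volume hS
      (f := cellMap y) (f' := fun _ => L) (fun x _ => L.hasFDerivWithinAt) hinj.injOn
      (fun x => ENNReal.ofReal (∑ j, |x j|))
    have hLdet : L.det = LinearMap.det (cellMap y) := by
      simp [L, ContinuousLinearMap.det]
    unfold cell at hvol ⊢
    rw [hcv, hvol, hLdet, lintegral_const_mul' _ _ ENNReal.ofReal_ne_top, mul_left_comm]
    gcongr
    calc ∫⁻ x in solidD n, ENNReal.ofReal (∑ j, |cellMap y x j|)
        = ∫⁻ x in solidD n, ∑ j, ENNReal.ofReal |∑ i, y i j * x i| := by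
          refine lintegral_congr fun x => ?_
          rw [ENNReal.ofReal_sum_of_nonneg fun _ _ => abs_nonneg _]
          simp only [cellMap_apply]
      _ = ∑ j, ∫⁻ x in solidD n, ENNReal.ofReal |∑ i, y i j * x i| :=
          lintegral_finsetSum _ fun j _ => by fun_prop
      _ ≤ ∑ j, ENNReal.ofReal ((Real.sqrt (∑ i, y i j ^ 2) + |∑ i, y i j|) / (n + 1))
            * volume (solidD n) := Finset.sum_le_sum fun j _ => simplex_bound _
      _ = ENNReal.ofReal (∑ j, (Real.sqrt (∑ i, y i j ^ 2) + |∑ i, y i j|) / (n + 1))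
            * volume (solidD n) := by
          rw [← Finset.sum_mul, ENNReal.ofReal_sum_of_nonneg fun _ _ => by positivity]
      _ ≤ _ := by
          gcongr
          exact coef_bound hn y M hM

lemma mem_hull_range {E : Type*} [AddCommGroup E] [Module ℝ E] {N : ℕ} (v : Fin N → E) (z : E)
    (hz : z ∈ convexHull ℝ (Set.range v)) :
    ∃ w : Fin N → ℝ, (∀ i, 0 ≤ w i) ∧ ∑ i, w i = 1 ∧ z = ∑ i, w i • v i := by
  have h : convexHull ℝ (Set.range v) ⊆ (Fintype.linearCombination ℝ v) '' stdSimplex ℝ (Fin N) := by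
    refine convexHull_min ?_ ((convex_stdSimplex ℝ (Fin N)).linear_image _)
    rintro _ ⟨i, rfl⟩
    exact ⟨Pi.single i 1, single_mem_stdSimplex ℝ i, by simp [Fintype.linearCombination_apply_single]⟩
  obtain ⟨w, hw, rfl⟩ := h hz
  exact ⟨w, hw.1, hw.2, Fintype.linearCombination_apply _ _ _⟩

lemma facet_functional {n : ℕ} {P F : Set (Fin n → ℝ)} (h0 : P ∈ nhds (0 : Fin n → ℝ))
    (hF : IsFacet P F) : ∃ l : (Fin n → ℝ) →L[ℝ] ℝ, (∀ x ∈ P, l x ≤ 1) ∧ F = {x ∈ P | l x = 1} := by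
  obtain ⟨hexp, hne, hnon, -⟩ := hF
  obtain ⟨l, hl⟩ := hexp hnon
  obtain ⟨f, hf⟩ := hnon
  have hf' := hf
  rw [hl] at hf'
  have hle : ∀ y ∈ P, l y ≤ l f := hf'.2
  have h0P : (0 : Fin n → ℝ) ∈ P := mem_of_mem_nhds h0
  have hpos : 0 < l f := by
    rcases (by simpa using hle 0 h0P : 0 ≤ l f).eq_or_lt with h | h
    · exfalso
      have hl0 : ∀ x, l x ≤ 0 := by
        intro x
        have ht : Filter.Tendsto (fun t : ℝ => t • x) (nhds 0) (nhds 0) := by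
          have : Continuous (fun t : ℝ => t • x) := by fun_prop
          simpa using this.tendsto 0
        have h1 : ∀ᶠ t in nhdsWithin (0:ℝ) (Set.Ioi 0), t • x ∈ P :=
          (ht.mono_left nhdsWithin_le_nhds).eventually_mem h0
        obtain ⟨t, htP, ht0⟩ := (h1.and self_mem_nhdsWithin).exists
        have h2 := hle _ htP
        rw [← h, map_smul, smul_eq_mul] at h2
        have ht0' : (0:ℝ) < t := ht0
        by_contra hc
        push Not at hc
        nlinarith [mul_pos ht0' hc]
      have hl1 : ∀ x, l x = 0 := by
        intro x
        have h1 := hl0 x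
        have h2 := hl0 (-x)
        rw [map_neg] at h2
        linarith
      apply hne
      rw [hl]
      ext x
      simp [hl1]
    · exact h
  refine ⟨(l f)⁻¹ • l, ?_, ?_⟩
  · intro x hx
    have := hle x hx
    simp only [smul_apply, smul_eq_mul]
    rw [inv_mul_le_iff₀ hpos]; simpa using this
  · rw [hl]
    ext x
    simp only [smul_apply, smul_eq_mul, Set.mem_ofPred_eq]
    refine and_congr_right fun hx => ?_
    rw [inv_mul_eq_one₀ hpos.ne']
    constructor
    · intro h; exact le_antisymm (h f hf'.1) (hle x hx)
    · intro h y hy; rw [← h]; exact hle y hy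

lemma cover {n N : ℕ} (hn : 1 ≤ n) (P : Set (Fin n → ℝ)) (v : Fin N → (Fin n → ℝ))
    (hP : P = convexHull ℝ (Set.range v)) (h0 : P ∈ nhds (0 : Fin n → ℝ)) (x : Fin n → ℝ)
    (hx : ∀ S : Finset (Fin N), Submodule.span ℝ (v '' S) ≠ ⊤ → x ∉ Submodule.span ℝ (v '' S)) :
    ∃ F, IsFacet P F ∧ ∃ z ∈ F, x = gauge P x • z := by
  have hconv : Convex ℝ P := hP ▸ convex_convexHull ℝ _
  have hcomp : IsCompact P := hP ▸ (Set.finite_range v).isCompact_convexHull ℝ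
  have : Nonempty (Fin n) := ⟨⟨0, hn⟩⟩
  have : Nontrivial (Fin n → ℝ) := inferInstance
  have hx0 : x ≠ 0 := by
    rintro rfl
    refine hx ∅ ?_ (Submodule.zero_mem _)
    simp
  have hr : 0 < gauge P x := (gauge_pos (absorbent_nhds_zero h0)
    ((NormedSpace.isVonNBounded_iff ℝ).2 hcomp.isBounded)).2 hx0
  set r := gauge P x with hrdef
  set z := r⁻¹ • x with hz
  have hxz : x = r • z := by rw [hz, smul_inv_smul₀ hr.ne']
  have hgz : gauge P z = 1 := by
    rw [hz, gauge_smul_of_nonneg (inv_nonneg.2 hr.le), smul_eq_mul, ← hrdef, inv_mul_cancel₀ hr.ne']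
  have hzP : z ∈ P := by
    have := (gauge_le_one_iff_mem_closure hconv h0 (x := z)).1 hgz.le
    rwa [hcomp.isClosed.closure_eq] at this
  have hzi : z ∉ interior P := fun h => by
    have := (gauge_lt_one_iff_mem_interior hconv h0).2 h
    linarith
  have h0i : (0 : Fin n → ℝ) ∈ interior P := mem_interior_iff_mem_nhds.2 h0
  obtain ⟨l0, hl0⟩ := geometric_hahn_banach_open_point hconv.interior isOpen_interior hzi
  have hpos : 0 < l0 z := by simpa using hl0 0 h0i
  have hle0 : ∀ y ∈ P, l0 y ≤ l0 z := by
    intro y hy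
    have h1 : y ∈ closure (interior P) := by
      rw [hconv.closure_interior_eq_closure_of_nonempty_interior ⟨0, h0i⟩]
      exact subset_closure hy
    exact closure_minimal (s := interior P) (t := {y | l0 y ≤ l0 z}) (fun y hy => (hl0 y hy).le)
      (isClosed_le l0.continuous continuous_const) h1
  obtain ⟨l, hldef⟩ : ∃ l : (Fin n → ℝ) →L[ℝ] ℝ, l = (l0 z)⁻¹ • l0 := ⟨_, rfl⟩
  have hlz : l z = 1 := by simp [hldef, hpos.ne']
  have hle : ∀ y ∈ P, l y ≤ 1 := by
    intro y hy
    rw [hldef]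
    simp only [smul_apply, smul_eq_mul]
    rw [inv_mul_le_iff₀ hpos]; simpa using hle0 y hy
  have hvP : ∀ i, v i ∈ P := fun i => by rw [hP]; exact subset_convexHull ℝ _ ⟨i, rfl⟩
  let S : Finset (Fin N) := Finset.univ.filter fun i => l (v i) = 1
  have hspan : z ∈ Submodule.span ℝ (v '' S) := by
    obtain ⟨w, hw0, hw1, hzw⟩ := mem_hull_range v z (hP ▸ hzP)
    have hsum : ∑ i, w i * (1 - l (v i)) = 0 := by
      have : l z = ∑ i, w i * l (v i) := by rw [hzw]; simp
      simp only [mul_sub, mul_one, Finset.sum_sub_distrib]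
      rw [hw1, ← this, hlz]; ring
    have hterm := (Finset.sum_eq_zero_iff_of_nonneg (fun i _ =>
      mul_nonneg (hw0 i) (sub_nonneg.2 (hle _ (hvP i))))).1 hsum
    rw [hzw]
    refine Submodule.sum_mem _ fun i _ => ?_
    rcases mul_eq_zero.1 (hterm i (Finset.mem_univ i)) with h | h
    · rw [h, zero_smul]; exact Submodule.zero_mem _
    · refine Submodule.smul_mem _ _ (Submodule.subset_span ⟨i, ?_, rfl⟩)
      simp [S]; linarith
  have htop : Submodule.span ℝ (v '' S) = ⊤ := by
    by_contra hne
    refine hx S hne ?_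
    rw [hxz]; exact Submodule.smul_mem _ _ hspan
  refine ⟨{p ∈ P | l p = 1}, ⟨?_, ?_, ⟨z, hzP, hlz⟩, ?_⟩, z, ⟨hzP, hlz⟩, hxz⟩
  · intro _
    refine ⟨l, ?_⟩
    ext p
    simp only [Set.mem_ofPred_eq]
    refine and_congr_right fun hp => ?_
    constructor
    · intro h y hy; rw [h]; exact hle y hy
    · intro h; exact le_antisymm (hle p hp) (hlz ▸ h z hzP)
  · intro h
    have : (0 : Fin n → ℝ) ∈ {p ∈ P | l p = 1} := by rw [h]; exact mem_of_mem_nhds h0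
    have := this.2
    simp at this
  · rw [direction_affineSpan]
    have hl_ne : (l : (Fin n → ℝ) →ₗ[ℝ] ℝ) ≠ 0 := by
      intro h
      have := congrArg (fun g : (Fin n → ℝ) →ₗ[ℝ] ℝ => g z) h
      simp [hlz] at this
    have hker := Module.Dual.finrank_ker_add_one_of_ne_zero (K := ℝ) hl_ne
    have hup : vectorSpan ℝ {p ∈ P | l p = 1} ≤ LinearMap.ker (l : (Fin n → ℝ) →ₗ[ℝ] ℝ) := by
      rw [vectorSpan_def]
      refine Submodule.span_le.2 ?_
      rintro _ ⟨p, hp, q, hq, rfl⟩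
      simp [hp.2, hq.2]
    have hfin := Submodule.finrank_mono hup
    have hlow : (⊤ : Submodule ℝ (Fin n → ℝ)) ≤ vectorSpan ℝ {p ∈ P | l p = 1} ⊔ Submodule.span ℝ {z} := by
      rw [← htop]
      refine Submodule.span_le.2 ?_
      rintro _ ⟨i, hi, rfl⟩
      have hi' : l (v i) = 1 := by simpa [S] using hi
      have : v i = (v i - z) + z := by simp
      rw [this]
      refine Submodule.add_mem_sup ?_ (Submodule.mem_span_singleton_self z)
      exact vsub_mem_vectorSpan ℝ (s := {p ∈ P | l p = 1}) ⟨hvP i, hi'⟩ ⟨hzP, hlz⟩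
    have h1 := Submodule.finrank_mono hlow
    have h2 := Submodule.finrank_add_le_finrank_add_finrank (vectorSpan ℝ {p ∈ P | l p = 1}) (Submodule.span ℝ {z})
    have h3 : Module.finrank ℝ (Submodule.span ℝ {z}) ≤ 1 := by
      simpa using finrank_span_le_card (R := ℝ) ({z} : Set (Fin n → ℝ))
    rw [finrank_top] at h1
    simp only [Module.finrank_fin_fun] at h1 hker
    omega

lemma cell_facet {n : ℕ} {P : Set (Fin n → ℝ)} (hconv : Convex ℝ P) (h0 : (0 : Fin n → ℝ) ∈ P)
    (y : Fin n → Fin n → ℝ) (hy : ∀ i, y i ∈ P) : cell y ⊆ P := by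
  rintro _ ⟨w, hw, rfl⟩
  have := hconv.sum_mem (t := Finset.univ) (w := fun o : Option (Fin n) => o.elim (1 - ∑ i, w i) w)
    (z := fun o => o.elim 0 y) ?_ ?_ ?_
  · simpa [Fintype.sum_option, cellMap, Fintype.linearCombination_apply] using this
  · rintro (_ | i) _
    · simpa using hw.2
    · exact hw.1 i
  · simp [Fintype.sum_option]
  · rintro (_ | i) _
    · exact h0
    · exact hy i

/-- For a symmetric polytope `P ⊂ ℝⁿ` whose facets are simplices
`conv{y₁,…,yₙ}` (enumerated by `Y`),
`(1/|P|)·∫_P ‖x‖₁ dx ≤ ((1+√2)/n)·max_{facets, signs} ‖ε₁y₁+⋯+εₙyₙ‖₁`. -/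
theorem mean_l1_norm_symmetric_polytope (n : ℕ) (hn : 1 ≤ n)
    (P : Set (Fin n → ℝ)) (N : ℕ) (v : Fin N → (Fin n → ℝ))
    (hP : P = convexHull ℝ (Set.range v)) (hint : (interior P).Nonempty)
    (hsymm : P = -P)
    (m : ℕ) (hm : 0 < m) (Y : Fin m → Fin n → (Fin n → ℝ))
    (hY : ∀ k, IsFacet P (convexHull ℝ (Set.range (Y k))))
    (hfacets : ∀ F, IsFacet P F → ∃ k, F = convexHull ℝ (Set.range (Y k))) :
    (volume P).toReal⁻¹ * ∫ x in P, ∑ j, |x j| ≤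
      ((1 + Real.sqrt 2) / n) *
        Finset.univ.sup'
          ⟨(⟨0, hm⟩, fun _ => true), Finset.mem_univ _⟩
          (fun kε : Fin m × (Fin n → Bool) =>
            ∑ j, |∑ i, (if kε.2 i then (1 : ℝ) else -1) * Y kε.1 i j|) := by
  classical
  set M := Finset.univ.sup'
          ⟨(⟨0, hm⟩, fun _ => true), Finset.mem_univ _⟩
          (fun kε : Fin m × (Fin n → Bool) =>
            ∑ j, |∑ i, (if kε.2 i then (1 : ℝ) else -1) * Y kε.1 i j|) with hMdef
  have hM : ∀ k, ∀ e : Fin n → Bool, ∑ j, |∑ i, (if e i then (1:ℝ) else -1) * Y k i j| ≤ M := by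
    intro k e
    exact Finset.le_sup' (fun kε : Fin m × (Fin n → Bool) =>
            ∑ j, |∑ i, (if kε.2 i then (1 : ℝ) else -1) * Y kε.1 i j|) (Finset.mem_univ (k, e))
  have hM0 : 0 ≤ M := le_trans (Finset.sum_nonneg fun j _ => abs_nonneg _) (hM ⟨0, hm⟩ fun _ => true)
  have hconv : Convex ℝ P := hP ▸ convex_convexHull ℝ _
  have hcomp : IsCompact P := hP ▸ (Set.finite_range v).isCompact_convexHull ℝ
  have h0i : (0 : Fin n → ℝ) ∈ interior P := by
    obtain ⟨p, hp⟩ := hint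
    have hp' : -p ∈ interior P := by
      rw [hsymm, mem_interior_iff_mem_nhds]
      have : P ∈ nhds (- -p) := by rw [neg_neg]; exact mem_interior_iff_mem_nhds.1 hp
      exact continuous_neg.continuousAt.preimage_mem_nhds this
    have := hconv.interior hp hp' (a := 1/2) (b := 1/2) (by norm_num) (by norm_num) (by norm_num)
    simpa using this
  have h0n : P ∈ nhds (0 : Fin n → ℝ) := mem_interior_iff_mem_nhds.1 h0i
  have h0P : (0 : Fin n → ℝ) ∈ P := interior_subset h0i
  choose l hl1 hl2 using fun k => facet_functional h0n (hY k)
  have hYF : ∀ k i, Y k i ∈ P ∧ l k (Y k i) = 1 := by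
    intro k i
    have : Y k i ∈ convexHull ℝ (Set.range (Y k)) := subset_convexHull ℝ _ ⟨i, rfl⟩
    rw [hl2 k] at this
    exact this
  have hsub : ∀ k, cell (Y k) ⊆ P := fun k => cell_facet hconv h0P _ fun i => (hYF k i).1
  -- choose one index for every facet
  obtain ⟨K, -, hKinj, hKim⟩ := Finset.exists_subset_injOn_image_eq_of_surjOn
    (f := fun k => convexHull ℝ (Set.range (Y k))) Set.univ
    (Finset.univ.image fun k => convexHull ℝ (Set.range (Y k)))
    (by intro F hF; simpa using hF)
  have hlin : ∀ k k', ∀ w, w ∈ solidD n → l k' (cellMap (Y k) w) ≤ l k (cellMap (Y k) w) := by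
    intro k k' w hw
    simp only [cellMap, Fintype.linearCombination_apply, map_sum, map_smul, smul_eq_mul]
    refine Finset.sum_le_sum fun i _ => ?_
    refine mul_le_mul_of_nonneg_left ?_ (hw.1 i)
    rw [(hYF k i).2]; exact hl1 k' _ (hYF k i).1
  have hdisj : (K : Set (Fin m)).Pairwise (Function.onFun (AEDisjoint volume) fun k => cell (Y k)) := by
    intro k hk k' hk' hne
    have hlne : l k ≠ l k' := by
      intro h
      refine hne (hKinj hk hk' ?_)
      simp only
      rw [hl2 k, hl2 k', h]
    have hker : LinearMap.ker ((l k - l k' : (Fin n → ℝ) →L[ℝ] ℝ) : (Fin n → ℝ) →ₗ[ℝ] ℝ) ≠ ⊤ := by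
      intro h
      apply hlne
      rw [LinearMap.ker_eq_top] at h
      ext x
      have := congrArg (fun g : (Fin n → ℝ) →ₗ[ℝ] ℝ => g x) h
      simpa [sub_eq_zero] using this
    refine measure_mono_null ?_ (Measure.addHaar_submodule volume _ hker)
    rintro x ⟨⟨w, hw, rfl⟩, ⟨w', hw', hww⟩⟩
    have h1 := hlin k k' w hw
    have h2 := hlin k' k w' hw'
    rw [hww] at h2
    simp only [SetLike.mem_coe, LinearMap.mem_ker]
    simp
    linarith
  have hvolsum : ∑ k ∈ K, volume (cell (Y k)) ≤ volume P := by
    rw [← measure_biUnion_finset₀ hdisj fun k _ => (cell_compact _).measurableSet.nullMeasurableSet]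
    exact measure_mono (Set.iUnion₂_subset fun k _ => hsub k)
  have hcover : P ≤ᵐ[volume] ⋃ k : K, cell (Y k) := by
    have hnull : ∀ᵐ x : Fin n → ℝ, ∀ S : Finset (Fin N), Submodule.span ℝ (v '' S) ≠ ⊤ →
        x ∉ Submodule.span ℝ (v '' S) := by
      rw [ae_all_iff]
      intro S
      by_cases h : Submodule.span ℝ (v '' S) = ⊤
      · exact Filter.Eventually.of_forall fun x hx => absurd h hx
      · filter_upwards [measure_eq_zero_iff_ae_notMem.1 (Measure.addHaar_submodule volume _ h)] with x hx _
        exact hx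
    filter_upwards [hnull] with x hx hxP
    obtain ⟨F, hF, z, hzF, hxz⟩ := cover hn P v hP h0n x hx
    obtain ⟨k0, hk0⟩ := hfacets F hF
    have hmem : F ∈ Finset.image (fun k => convexHull ℝ (Set.range (Y k))) K := by
      rw [hKim, hk0]; exact Finset.mem_image_of_mem _ (Finset.mem_univ _)
    obtain ⟨k, hkK, hk⟩ := Finset.mem_image.1 hmem
    rw [← hk] at hzF
    obtain ⟨w, hw0, hw1, hzw⟩ := mem_hull_range _ _ hzF
    refine Set.mem_iUnion.2 ⟨⟨k, hkK⟩, gauge P x • w, ⟨fun i => ?_, ?_⟩, ?_⟩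
    · exact mul_nonneg (gauge_nonneg _) (hw0 i)
    · simp only [Pi.smul_apply, smul_eq_mul, ← Finset.mul_sum, hw1, mul_one]
      exact gauge_le_one_of_mem hxP
    · rw [map_smul]
      conv_rhs => rw [hxz]
      rw [hzw, cellMap, Fintype.linearCombination_apply]
  set C := (1 + Real.sqrt 2) / n * M with hC
  have hC0 : 0 ≤ C := by positivity
  have hmain : ∫⁻ x in P, ENNReal.ofReal (∑ j, |x j|) ≤ ENNReal.ofReal C * volume P := by
    calc ∫⁻ x in P, ENNReal.ofReal (∑ j, |x j|)
        ≤ ∫⁻ x in ⋃ k : K, cell (Y k), ENNReal.ofReal (∑ j, |x j|) := lintegral_mono_set' hcover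
      _ ≤ ∑' k : K, ∫⁻ x in cell (Y k), ENNReal.ofReal (∑ j, |x j|) := lintegral_iUnion_le _ _
      _ = ∑ k ∈ K, ∫⁻ x in cell (Y k), ENNReal.ofReal (∑ j, |x j|) := by
          rw [tsum_fintype]
          exact Finset.sum_coe_sort K fun k => ∫⁻ x in cell (Y k), ENNReal.ofReal (∑ j, |x j|)
      _ ≤ ∑ k ∈ K, ENNReal.ofReal C * volume (cell (Y k)) :=
          Finset.sum_le_sum fun k _ => cell_bound hn (Y k) M (hM k)
      _ = ENNReal.ofReal C * ∑ k ∈ K, volume (cell (Y k)) := by rw [Finset.mul_sum]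
      _ ≤ _ := by gcongr
  have hfin : volume P ≠ ⊤ := hcomp.measure_lt_top.ne
  have hposV : 0 < (volume P).toReal :=
    ENNReal.toReal_pos (Measure.measure_pos_of_mem_nhds volume h0n).ne' hfin
  rw [inv_mul_le_iff₀ hposV, mul_comm,
    integral_eq_lintegral_of_nonneg_ae
      (Filter.Eventually.of_forall fun x => Finset.sum_nonneg fun j _ => abs_nonneg _)
      (Continuous.aestronglyMeasurable (by fun_prop))]
  refine (ENNReal.toReal_mono (ENNReal.mul_ne_top ENNReal.ofReal_ne_top hfin) hmain).trans_eq ?_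
  rw [ENNReal.toReal_mul, ENNReal.toReal_ofReal hC0]
end
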